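/- Law of large numbers for lifetime sums: fix integers 0 ≤ q < d. Let P be a stationary and ergodic probability measure on Ω = [0,1]^{K^d} such that the marginal distribution function F^Q(t) = P(ω_Q ≤ t) is continuous in t ∈ [0,1] for every Q ∈ K^d, and let β̂_q(t) := limsup_{n→∞} |Λ_n|^{−1} E[β_q^n(t)]. Then |Λ_n|^{−1} L_q^n → ∫_0^1 β̂_q(t) dt as n → ∞, P-almost surely, where L_q^n := ∫_0^1 β_q^n(t) dt is the q-th lifetime sum. -/

import Mathlib

open MeasureTheory Filter Topology

noncomputable section

/-- An elementary cube in `ℝ^d`: the `i`-th component is the elementary interval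
`[l, l+1]` if the Boolean is `true` (nondegenerate) and `[l, l]` if `false` (degenerate). -/
abbrev ElemCube (d : ℕ) := Fin d → ℤ × Bool

/-- The dimension of an elementary cube: the number of nondegenerate components. -/
def cubeDim {d : ℕ} (Q : ElemCube d) : ℕ :=
  (Finset.univ.filter fun i => (Q i).2 = true).card

/-- The geometric realization of an elementary cube as a subset of `ℝ^d`. -/
def cubeSet {d : ℕ} (Q : ElemCube d) : Set (Fin d → ℝ) :=
  {x | ∀ i, x i ∈ Set.Icc ((Q i).1 : ℝ) ((Q i).1 + (if (Q i).2 then 1 else 0))}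

/-- A cubical set is a union of elementary cubes. -/
def IsCubical {d : ℕ} (X : Set (Fin d → ℝ)) : Prop :=
  ∃ S : Set (ElemCube d), X = ⋃ Q ∈ S, cubeSet Q

/-- The free `ℤ`-module generated by all elementary cubes of `ℝ^d` (all dimensions mixed). -/
abbrev CubChain (d : ℕ) := ElemCube d →₀ ℤ

/-- The cubical boundary of a single elementary cube, defined by induction on the ambient
dimension, following the inductive definition: in `ℝ¹`, `∂ [l,l+1]^ = [l+1]^ - [l]^` and
`∂ Q̂ = 0` for degenerate `Q`; and for `Q = I × P`,
`∂ Q̂ = (∂ Î) ⋄ P̂ + (-1)^(dim I) Î ⋄ (∂ P̂)`, where `⋄` is the cubical product. -/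
def boundaryCube : (d : ℕ) → ElemCube d → CubChain d
  | 0, _ => 0
  | d + 1, Q =>
      (if (Q 0).2 then
          Finsupp.single (Fin.cons ((Q 0).1 + 1, false) (fun i => Q i.succ)) (1 : ℤ)
            - Finsupp.single (Fin.cons ((Q 0).1, false) (fun i => Q i.succ)) (1 : ℤ)
        else 0)
      + (if (Q 0).2 then (-1 : ℤ) else 1) •
          (boundaryCube d (fun i => Q i.succ)).sum
            (fun R n => Finsupp.single (Fin.cons (Q 0) R) n)

/-- The cubical boundary operator, the `ℤ`-linear extension of `boundaryCube`. -/
def boundaryHom (d : ℕ) : CubChain d →ₗ[ℤ] CubChain d :=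
  Finsupp.lsum ℤ fun Q => LinearMap.toSpanSingleton ℤ (CubChain d) (boundaryCube d Q)

/-- `C_k^d(X)`: the submodule of chains supported on the `k`-dimensional elementary cubes
contained in `X`. -/
def chainsOn (d k : ℕ) (X : Set (Fin d → ℝ)) : Submodule ℤ (CubChain d) :=
  Finsupp.supported ℤ ℤ {Q : ElemCube d | cubeDim Q = k ∧ cubeSet Q ⊆ X}

/-- `Z_q(X) = ker ∂_q^X`, the cycles of the cubical set `X` in degree `q`. -/
def cycleMod (d q : ℕ) (X : Set (Fin d → ℝ)) : Submodule ℤ (CubChain d) :=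
  chainsOn d q X ⊓ LinearMap.ker (boundaryHom d)

/-- `B_q(X) = im ∂_{q+1}^X`, the boundaries of the cubical set `X` in degree `q`. -/
def boundaryMod (d q : ℕ) (X : Set (Fin d → ℝ)) : Submodule ℤ (CubChain d) :=
  Submodule.map (boundaryHom d) (chainsOn d (q + 1) X)

/-- The `q`-th Betti number of a cubical set: the rank of the free part of the `q`-th
cubical homology `H_q(X) = Z_q(X) / B_q(X)`. -/
def betti (d q : ℕ) (X : Set (Fin d → ℝ)) : ℕ :=
  Module.finrank ℤ
    (↥(cycleMod d q X) ⧸ (boundaryMod d q X).comap (cycleMod d q X).subtype)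

/-- `Λ_n = [-n, n]^d ⊆ ℝ^d`. -/
def lambda (d n : ℕ) : Set (Fin d → ℝ) := {x | ∀ i, x i ∈ Set.Icc (-(n : ℝ)) n}

/-- The configuration space `Ω = [0,1]^{K^d}` with the product σ-field. -/
abbrev Config (d : ℕ) := ElemCube d → unitInterval

/-- Translation of an elementary cube by `x ∈ ℤ^d`. -/
def translateCube {d : ℕ} (x : Fin d → ℤ) (Q : ElemCube d) : ElemCube d :=
  fun i => ((Q i).1 + x i, (Q i).2)

/-- The translation action `τ_x` on configurations: `(τ_x ω)_Q = ω_{-x+Q}`. -/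
def configShift {d : ℕ} (x : Fin d → ℤ) (ω : Config d) : Config d :=
  fun Q => ω (translateCube (-x) Q)

/-- Stationarity of a measure on configuration space: `P(τ_x⁻¹ A) = P(A)`. -/
def Stationary {d : ℕ} (P : Measure (Config d)) : Prop :=
  ∀ (x : Fin d → ℤ) (A : Set (Config d)), MeasurableSet A → P (configShift x ⁻¹' A) = P A

/-- Ergodicity of a measure on configuration space under translations. -/
def ErgodicConfig {d : ℕ} (P : Measure (Config d)) : Prop :=
  ∀ A : Set (Config d), MeasurableSet A →
    (∀ x : Fin d → ℤ, configShift x ⁻¹' A = A) → P A = 0 ∨ P A = 1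

/-- The random cubical set `X(t) = ⋃ {Q ∈ K^d : ω_Q ≤ t}`. -/
def cubSet {d : ℕ} (ω : Config d) (t : ℝ) : Set (Fin d → ℝ) :=
  ⋃ Q ∈ {Q : ElemCube d | (ω Q : ℝ) ≤ t}, cubeSet Q

/-- `β_q^n(t)(ω) = β_q(X(t) ∩ Λ_n)`. -/
def bettiN (d q n : ℕ) (t : ℝ) (ω : Config d) : ℕ :=
  betti d q (cubSet ω t ∩ lambda d n)

/-- `β̂_q(t) := limsup_{n → ∞} |Λ_n|⁻¹ E[β_q^n(t)]`, where `|Λ_n| = (2n)^d`. -/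
def betaHat (d q : ℕ) (P : Measure (Config d)) (t : ℝ) : ℝ :=
  limsup (fun n : ℕ => ((2 * (n : ℝ)) ^ d)⁻¹ * ∫ ω, (bettiN d q n t ω : ℝ) ∂P) atTop

/-- The lifetime sum `L_q^n = ∫_0^1 β_q^n(t) dt`. -/
def lifetimeSum (d q n : ℕ) (ω : Config d) : ℝ :=
  ∫ t in (0 : ℝ)..1, (bettiN d q n t ω : ℝ)


theorem fin_of_le {M : Type} [AddCommGroup M] {p r : Submodule ℤ M} (h : p ≤ r)
    [Module.Finite ℤ r] : Module.Finite ℤ p := by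
  have : IsNoetherian ℤ r := isNoetherian_of_isNoetherianRing_of_finite ℤ r
  have : Function.Injective (Submodule.inclusion h) := Submodule.inclusion_injective h
  exact Module.Finite.of_injective (Submodule.inclusion h) this

theorem fr_sup_inf {M : Type} [AddCommGroup M] (s t : Submodule ℤ M)
    [Module.Finite ℤ s] [Module.Finite ℤ t] :
    Module.finrank ℤ ↥(s ⊔ t) + Module.finrank ℤ ↥(s ⊓ t)
      = Module.finrank ℤ s + Module.finrank ℤ t := by
  have : Module.Finite ℤ ↥(s ⊓ t) := fin_of_le inf_le_left
  have h := Submodule.rank_sup_add_rank_inf_eq s t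
  rw [← Module.finrank_eq_rank, ← Module.finrank_eq_rank, ← Module.finrank_eq_rank,
    ← Module.finrank_eq_rank] at h
  exact_mod_cast h

theorem fr_ker {M : Type} [AddCommGroup M] (N : Submodule ℤ M) [Module.Finite ℤ N]
    (φ : M →ₗ[ℤ] ℤ) :
    Module.finrank ℤ N ≤ Module.finrank ℤ ↥(N ⊓ LinearMap.ker φ) + 1 := by
  let ψ : N →ₗ[ℤ] ℤ := φ.domRestrict N
  have h1 := Submodule.finrank_quotient_add_finrank (LinearMap.ker ψ)
  have h2 : Module.finrank ℤ (N ⧸ LinearMap.ker ψ) ≤ 1 := by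
    rw [LinearEquiv.finrank_eq ψ.quotKerEquivRange]
    refine (Submodule.finrank_le _).trans ?_
    simp
  have h3 : Module.finrank ℤ (LinearMap.ker ψ) = Module.finrank ℤ ↥(N ⊓ LinearMap.ker φ) := by
    have e : (LinearMap.ker ψ).map N.subtype = N ⊓ LinearMap.ker φ := by
      ext x
      simp [ψ, LinearMap.domRestrict_apply, and_comm]
    rw [← e]
    exact (LinearEquiv.finrank_eq
      (Submodule.equivMapOfInjective N.subtype N.injective_subtype _))
  omega

theorem fr_span {M : Type} [AddCommGroup M] (M' N Z : Submodule ℤ M) (v : M)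
    [Module.Finite ℤ N] [Module.Finite ℤ M'] (hNM : N ≤ M')
    (h : M' ≤ N ⊔ Submodule.span ℤ {v}) :
    Module.finrank ℤ ↥(M' ⊓ Z) ≤ Module.finrank ℤ ↥(N ⊓ Z) + 1 := by
  have : Module.Finite ℤ ↥(M' ⊓ Z) := fin_of_le inf_le_left
  have h1 := fr_sup_inf (M' ⊓ Z) N
  have e : M' ⊓ Z ⊓ N = N ⊓ Z := by
    apply le_antisymm
    · exact le_inf inf_le_right (inf_le_left.trans inf_le_right)
    · exact le_inf (le_inf (inf_le_left.trans hNM) inf_le_right) inf_le_left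
  rw [e] at h1
  have h2 : Module.finrank ℤ ↥(M' ⊓ Z ⊔ N) ≤ Module.finrank ℤ M' :=
    Submodule.finrank_mono (sup_le inf_le_left hNM)
  have h3 := fr_sup_inf N (Submodule.span ℤ {v})
  have h4 : Module.finrank ℤ M' ≤ Module.finrank ℤ ↥(N ⊔ Submodule.span ℤ {v}) :=
    Submodule.finrank_mono h
  have h5 : Module.finrank ℤ (Submodule.span ℤ {v}) ≤ 1 := by
    simpa using finrank_span_le_card (R := ℤ) ({v} : Set M)
  omega

def chS (d k : ℕ) (S : Set (ElemCube d)) : Submodule ℤ (CubChain d) :=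
  Finsupp.supported ℤ ℤ {Q : ElemCube d | cubeDim Q = k ∧ Q ∈ S}

def zS (d q : ℕ) (S : Set (ElemCube d)) : Submodule ℤ (CubChain d) :=
  chS d q S ⊓ LinearMap.ker (boundaryHom d)

def oS (d q : ℕ) (S : Set (ElemCube d)) : Submodule ℤ (CubChain d) :=
  Submodule.map (boundaryHom d) (chS d (q + 1) S)

def bS (d q : ℕ) (S : Set (ElemCube d)) : ℕ :=
  Module.finrank ℤ (↥(zS d q S) ⧸ (oS d q S).comap (zS d q S).subtype)

theorem betti_eq (d q : ℕ) (X : Set (Fin d → ℝ)) :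
    betti d q X = bS d q {Q | cubeSet Q ⊆ X} := rfl

theorem chS_fin {d k : ℕ} {S : Set (ElemCube d)} (hS : S.Finite) :
    Module.Finite ℤ (chS d k S) := by
  have : Finite {Q : ElemCube d | cubeDim Q = k ∧ Q ∈ S} :=
    (hS.subset (fun Q h => h.2)).to_subtype
  exact Module.Finite.equiv (Finsupp.supportedEquivFinsupp (M := ℤ) (R := ℤ)
    {Q : ElemCube d | cubeDim Q = k ∧ Q ∈ S}).symm

theorem zS_fin {d k : ℕ} {S : Set (ElemCube d)} (hS : S.Finite) :
    Module.Finite ℤ (zS d k S) := by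
  have := chS_fin (k := k) hS
  exact fin_of_le (inf_le_left : zS d k S ≤ chS d k S)

theorem oS_fin {d k : ℕ} {S : Set (ElemCube d)} (hS : S.Finite) :
    Module.Finite ℤ (oS d k S) := by
  have := chS_fin (k := k + 1) hS
  exact Module.Finite.map _ _

theorem bS_add {d q : ℕ} {S : Set (ElemCube d)} (hS : S.Finite) :
    bS d q S + Module.finrank ℤ ↥(oS d q S ⊓ zS d q S) = Module.finrank ℤ (zS d q S) := by
  have := zS_fin (k := q) hS
  rw [← Submodule.finrank_quotient_add_finrank ((oS d q S).comap (zS d q S).subtype)]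
  congr 1
  have e : ((oS d q S).comap (zS d q S).subtype).map (zS d q S).subtype = oS d q S ⊓ zS d q S := by
    rw [Submodule.map_comap_subtype, inf_comm]
  rw [← e]
  exact (LinearEquiv.finrank_eq
      (Submodule.equivMapOfInjective _ (zS d q S).injective_subtype _)).symm

theorem chS_mono {d k : ℕ} {S T : Set (ElemCube d)} (h : S ⊆ T) : chS d k S ≤ chS d k T :=
  Finsupp.supported_mono (fun _ hQ => ⟨hQ.1, h hQ.2⟩)

theorem chS_insert_ne {d k : ℕ} {S : Set (ElemCube d)} {σ : ElemCube d} (h : cubeDim σ ≠ k) :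
    chS d k (insert σ S) = chS d k S := by
  unfold chS
  congr 1
  ext Q
  simp only [Set.mem_ofPred_eq, Set.mem_insert_iff]
  constructor
  · rintro ⟨h1, rfl | h2⟩
    · exact absurd h1 h
    · exact ⟨h1, h2⟩
  · rintro ⟨h1, h2⟩
    exact ⟨h1, Or.inr h2⟩

theorem chS_insert_ker {d k : ℕ} {S : Set (ElemCube d)} {σ : ElemCube d} (h : σ ∉ S) :
    chS d k (insert σ S) ⊓ LinearMap.ker (Finsupp.lapply (R := ℤ) (M := ℤ) σ) = chS d k S := by
  ext c
  simp only [chS, Submodule.mem_inf, Finsupp.mem_supported, LinearMap.mem_ker,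
    Finsupp.lapply_apply]
  constructor
  · rintro ⟨h1, h2⟩ Q hQ
    obtain ⟨h3, h4⟩ := h1 hQ
    rcases h4 with rfl | h4
    · simp [h2] at hQ
    · exact ⟨h3, h4⟩
  · intro h1
    refine ⟨fun Q hQ => ⟨(h1 hQ).1, Or.inr (h1 hQ).2⟩, ?_⟩
    by_contra h2
    exact h (h1 (Finsupp.mem_support_iff.2 h2)).2

theorem chS_insert_le {d k : ℕ} {S : Set (ElemCube d)} {σ : ElemCube d} :
    chS d k (insert σ S) ≤ chS d k S ⊔ Submodule.span ℤ {Finsupp.single σ 1} := by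
  have : chS d k (insert σ S) ≤ Finsupp.supported ℤ ℤ
      ({Q : ElemCube d | cubeDim Q = k ∧ Q ∈ S} ∪ {σ}) := by
    apply Finsupp.supported_mono
    rintro Q ⟨h1, h2 | h2⟩
    · exact Or.inr h2
    · exact Or.inl ⟨h1, h2⟩
  rw [Finsupp.supported_union] at this
  refine this.trans (sup_le_sup le_rfl ?_)
  rw [Finsupp.supported_eq_span_single]
  simp

theorem bS_insert {d q : ℕ} {S : Set (ElemCube d)} (hS : S.Finite) {σ : ElemCube d}
    (h : σ ∉ S) : |(bS d q (insert σ S) : ℤ) - bS d q S| ≤ 1 := by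
  have hT : (insert σ S).Finite := hS.insert σ
  have e1 := bS_add (q := q) hS
  have e2 := bS_add (q := q) hT
  have := zS_fin (k := q) hS
  have := zS_fin (k := q) hT
  have := oS_fin (k := q) hS
  have := oS_fin (k := q) hT
  by_cases h1 : cubeDim σ = q
  · have ho : oS d q (insert σ S) = oS d q S := by
      unfold oS; rw [chS_insert_ne]; omega
    have hz : zS d q (insert σ S) ⊓ LinearMap.ker (Finsupp.lapply (R := ℤ) (M := ℤ) σ)
        = zS d q S := by
      unfold zS
      rw [inf_right_comm, chS_insert_ker h]
    rw [ho] at e2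
    have : Module.Finite ℤ ↥(oS d q S ⊓ zS d q (insert σ S)) := fin_of_le inf_le_left
    have k1 := fr_ker (zS d q (insert σ S)) (Finsupp.lapply (R := ℤ) (M := ℤ) σ)
    have k2 := fr_ker (oS d q S ⊓ zS d q (insert σ S)) (Finsupp.lapply (R := ℤ) (M := ℤ) σ)
    rw [inf_assoc, hz] at k2
    rw [hz] at k1
    have hle : zS d q S ≤ zS d q (insert σ S) := by rw [← hz]; exact inf_le_left
    have k3 := Submodule.finrank_mono hle
    have k4 : Module.finrank ℤ ↥(oS d q S ⊓ zS d q S) ≤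
      Module.finrank ℤ ↥(oS d q S ⊓ zS d q (insert σ S)) :=
      Submodule.finrank_mono (inf_le_inf_left _ hle)
    rw [abs_le]; omega
  · have hz : zS d q (insert σ S) = zS d q S := by
      unfold zS; rw [chS_insert_ne h1]
    rw [hz] at e2
    have hle : oS d q S ≤ oS d q (insert σ S) :=
      Submodule.map_mono (chS_mono (Set.subset_insert _ _))
    have : Module.Finite ℤ ↥(oS d q (insert σ S) ⊓ zS d q S) := fin_of_le inf_le_left
    have k1 := fr_span (oS d q (insert σ S)) (oS d q S) (zS d q S)
      (boundaryHom d (Finsupp.single σ 1)) hle (by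
        unfold oS
        refine (Submodule.map_mono chS_insert_le).trans ?_
        rw [Submodule.map_sup, Submodule.map_span, Set.image_singleton])
    have k4 : Module.finrank ℤ ↥(oS d q S ⊓ zS d q S) ≤
      Module.finrank ℤ ↥(oS d q (insert σ S) ⊓ zS d q S) :=
      Submodule.finrank_mono (inf_le_inf_right _ hle)
    rw [abs_le]; omega

theorem bS_union {d q : ℕ} {S : Set (ElemCube d)} (hS : S.Finite) (T : Finset (ElemCube d))
    (h : Disjoint S (T : Set (ElemCube d))) :
    |(bS d q (S ∪ T) : ℤ) - bS d q S| ≤ T.card := by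
  classical
  induction T using Finset.induction_on with
  | empty => simp
  | insert σ T hσ ih =>
    have h1 : Disjoint S (T : Set (ElemCube d)) :=
      h.mono_right (by simp)
    have h2 : σ ∉ S ∪ (T : Set (ElemCube d)) := by
      rintro (h3 | h3)
      · exact Set.disjoint_left.1 h h3 (by simp)
      · exact hσ h3
    have h3 := bS_insert (q := q) (hS.union T.finite_toSet) h2
    have h4 := ih h1
    rw [Finset.card_insert_of_notMem hσ, Finset.coe_insert, Set.union_insert]
    push_cast
    rw [abs_le] at *
    omega

def BdC {d : ℕ} (A : Set (ElemCube d)) : Prop :=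
  ∀ Q ∈ A, ∀ R ∈ (boundaryCube d Q).support, R ∈ A

theorem BdC.map {d : ℕ} {A : Set (ElemCube d)} (hA : BdC A) {c : CubChain d}
    (hc : c ∈ Finsupp.supported ℤ ℤ A) : boundaryHom d c ∈ Finsupp.supported ℤ ℤ A := by
  rw [boundaryHom, Finsupp.lsum_apply]
  apply Submodule.sum_mem
  intro Q hQ
  simp only [LinearMap.toSpanSingleton_apply]
  apply Submodule.smul_mem
  intro R hR
  exact hA Q (hc hQ) R hR

theorem bS_disj {d q : ℕ} {S T A A' : Set (ElemCube d)} (hS : S.Finite) (hT : T.Finite)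
    (hA : BdC A) (hA' : BdC A') (hSA : S ⊆ A) (hTA : T ⊆ A') (hd : Disjoint A A') :
    bS d q (S ∪ T) = bS d q S + bS d q T := by
  have hdis : Disjoint (Finsupp.supported ℤ ℤ A) (Finsupp.supported ℤ ℤ A') :=
    Finsupp.disjoint_supported_supported hd
  have hu : ∀ k, chS d k (S ∪ T) = chS d k S ⊔ chS d k T := by
    intro k
    unfold chS
    rw [← Finsupp.supported_union]
    congr 1
    ext Q
    simp only [Set.mem_ofPred_eq, Set.mem_union]
    tauto
  have lS : ∀ k, chS d k S ≤ Finsupp.supported ℤ ℤ A :=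
    fun k => Finsupp.supported_mono (fun Q h => hSA h.2)
  have lT : ∀ k, chS d k T ≤ Finsupp.supported ℤ ℤ A' :=
    fun k => Finsupp.supported_mono (fun Q h => hTA h.2)
  have key : ∀ a b : CubChain d, a ∈ Finsupp.supported ℤ ℤ A → b ∈ Finsupp.supported ℤ ℤ A' →
      a + b = 0 → a = 0 ∧ b = 0 := by
    intro a b ha hb h
    have e : a = -b := eq_neg_of_add_eq_zero_left h
    have : a = 0 := Submodule.disjoint_def.1 hdis a ha (by rw [e]; exact neg_mem hb)
    subst this
    simpa using h
  have hz : zS d q (S ∪ T) = zS d q S ⊔ zS d q T := by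
    apply le_antisymm
    · rintro c ⟨h1, h2⟩
      rw [hu] at h1
      obtain ⟨a, ha, b, hb, rfl⟩ := Submodule.mem_sup.1 h1
      have h3 : boundaryHom d a + boundaryHom d b = 0 := by
        rw [← map_add]; exact h2
      obtain ⟨h4, h5⟩ := key _ _ (hA.map (lS _ ha)) (hA'.map (lT _ hb)) h3
      exact Submodule.add_mem_sup ⟨ha, h4⟩ ⟨hb, h5⟩
    · exact sup_le (inf_le_inf_right _ (chS_mono Set.subset_union_left))
        (inf_le_inf_right _ (chS_mono Set.subset_union_right))
  have ho : oS d q (S ∪ T) ⊓ zS d q (S ∪ T) = (oS d q S ⊓ zS d q S) ⊔ (oS d q T ⊓ zS d q T) := by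
    apply le_antisymm
    · rintro c ⟨h1, h2⟩
      rw [hz] at h2
      obtain ⟨z, hz1, w, hw, rfl⟩ := Submodule.mem_sup.1 h2
      obtain ⟨e, he, hee⟩ := h1
      rw [hu] at he
      obtain ⟨a, ha, b, hb, rfl⟩ := Submodule.mem_sup.1 he
      rw [map_add] at hee
      have h3 : (boundaryHom d a - z) + (boundaryHom d b - w) = 0 := by
        rw [sub_add_sub_comm, hee, sub_self]
      obtain ⟨h4, h5⟩ := key _ _ (sub_mem (hA.map (lS _ ha)) (lS _ hz1.1))
        (sub_mem (hA'.map (lT _ hb)) (lT _ hw.1)) h3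
      refine Submodule.add_mem_sup ⟨⟨a, ha, sub_eq_zero.1 h4⟩, hz1⟩ ⟨⟨b, hb, sub_eq_zero.1 h5⟩, hw⟩
    · exact sup_le (inf_le_inf (Submodule.map_mono (chS_mono Set.subset_union_left))
        (inf_le_inf_right _ (chS_mono Set.subset_union_left)))
        (inf_le_inf (Submodule.map_mono (chS_mono Set.subset_union_right))
        (inf_le_inf_right _ (chS_mono Set.subset_union_right)))
  have e1 := bS_add (q := q) hS
  have e2 := bS_add (q := q) hT
  have e3 := bS_add (q := q) (hS.union hT)
  rw [ho, hz] at e3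
  have := zS_fin (k := q) hS
  have := zS_fin (k := q) hT
  have : Module.Finite ℤ ↥(oS d q S ⊓ zS d q S) := fin_of_le inf_le_right
  have : Module.Finite ℤ ↥(oS d q T ⊓ zS d q T) := fin_of_le inf_le_right
  have k1 := fr_sup_inf (zS d q S) (zS d q T)
  have k2 := fr_sup_inf (oS d q S ⊓ zS d q S) (oS d q T ⊓ zS d q T)
  have d1 : zS d q S ⊓ zS d q T = ⊥ :=
    (hdis.mono (inf_le_left.trans (lS q)) (inf_le_left.trans (lT q))).eq_bot
  have d2 : (oS d q S ⊓ zS d q S) ⊓ (oS d q T ⊓ zS d q T) = ⊥ := by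
    rw [eq_bot_iff, ← d1]
    exact inf_le_inf inf_le_right inf_le_right
  rw [d1] at k1
  rw [d2] at k2
  simp only [finrank_bot] at k1 k2
  omega

theorem BdC.iUnion {d : ℕ} {ι : Type} (J : Finset ι) {A : ι → Set (ElemCube d)}
    (hA : ∀ x, BdC (A x)) : BdC (⋃ x ∈ J, A x) := by
  intro Q hQ R hR
  simp only [Set.mem_iUnion] at hQ ⊢
  obtain ⟨x, hx, hQ⟩ := hQ
  exact ⟨x, hx, hA x Q hQ R hR⟩

theorem bS_empty (d q : ℕ) : bS d q ∅ = 0 := by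
  have h := bS_add (d := d) (q := q) (S := ∅) Set.finite_empty
  have : zS d q ∅ = ⊥ := by
    simp [zS, chS]
  rw [this] at h
  simp at h
  exact h.1

theorem bS_biUnion {d q : ℕ} {ι : Type} (J : Finset ι) {S : Set (ElemCube d)}
    (hS : S.Finite) (A : ι → Set (ElemCube d))
    (hA : ∀ x, BdC (A x)) (hd : (J : Set ι).PairwiseDisjoint A) :
    bS d q (⋃ x ∈ J, S ∩ A x) = ∑ x ∈ J, bS d q (S ∩ A x) := by
  classical
  induction J using Finset.induction_on with
  | empty => simp [bS_empty]
  | insert a J ha ih =>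
    rw [Finset.sum_insert ha, Finset.set_biUnion_insert, ← ih (hd.subset (by simp))]
    apply bS_disj (A := A a) (A' := ⋃ x ∈ J, A x)
    · exact hS.subset Set.inter_subset_left
    · exact hS.subset (by simp)
    · exact hA a
    · exact BdC.iUnion J hA
    · exact Set.inter_subset_right
    · exact Set.iUnion₂_mono (fun x _ => Set.inter_subset_right)
    · simp only [Set.disjoint_iUnion_right]
      intro x hx
      exact hd (by simp) (by simp [hx]) (by rintro rfl; exact ha hx)

theorem bS_near {d q : ℕ} {ι : Type} (J : Finset ι) {S : Set (ElemCube d)}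
    (W : Finset (ElemCube d)) (hSW : S ⊆ W) (A : ι → Finset (ElemCube d))
    (hA : ∀ x, BdC (A x : Set (ElemCube d))) (hAW : ∀ x ∈ J, A x ⊆ W)
    (hd : ∀ x ∈ J, ∀ y ∈ J, x ≠ y → Disjoint (A x) (A y)) :
    |(bS d q S : ℤ) - ∑ x ∈ J, (bS d q (S ∩ A x) : ℤ)| ≤ W.card - ∑ x ∈ J, ((A x).card : ℤ) := by
  classical
  have hS : S.Finite := W.finite_toSet.subset hSW
  have e := bS_biUnion (q := q) J hS (fun x => (A x : Set (ElemCube d))) hA (by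
    intro x hx y hy hxy
    exact Finset.disjoint_coe.2 (hd x hx y hy hxy))
  set U : Finset (ElemCube d) := J.biUnion A with hU
  have hUc : U.card = ∑ x ∈ J, (A x).card := Finset.card_biUnion hd
  have hUW : U ⊆ W := Finset.biUnion_subset.2 hAW
  set T : Finset (ElemCube d) := (W \ U).filter (· ∈ S) with hT
  have hTc : T.card ≤ (W \ U).card := Finset.card_filter_le _ _
  have hc := Finset.card_sdiff_add_card_eq_card hUW
  have hST : S = (⋃ x ∈ J, S ∩ A x) ∪ T := by
    ext Q
    simp only [Set.mem_union, Set.mem_iUnion, Set.mem_inter_iff, hT, hU, Finset.coe_filter,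
      Finset.mem_sdiff, Finset.mem_biUnion, Set.mem_ofPred_eq, Finset.mem_coe]
    constructor
    · intro h
      by_cases h2 : ∃ x ∈ J, Q ∈ A x
      · obtain ⟨x, hx, h3⟩ := h2
        exact Or.inl ⟨x, hx, h, h3⟩
      · exact Or.inr ⟨⟨hSW h, h2⟩, h⟩
    · rintro (⟨x, hx, h, h3⟩ | h)
      · exact h
      · exact h.2
  have h1 := bS_union (q := q) (S := ⋃ x ∈ J, S ∩ A x) (hS.subset (by simp)) T (by
    rw [Set.disjoint_left]
    intro Q hQ h2
    simp only [Set.mem_iUnion] at hQ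
    obtain ⟨x, hx, h, h3⟩ := hQ
    simp only [hT, hU, Finset.coe_filter, Finset.mem_sdiff, Finset.mem_biUnion,
      Set.mem_ofPred_eq] at h2
    exact h2.1.2 ⟨x, hx, h3⟩)
  rw [← hST, e] at h1
  push_cast at h1
  have : (∑ x ∈ J, ((A x).card : ℤ)) = U.card := by rw [hUc]; push_cast; rfl
  rw [this]
  omega

theorem mem_boundaryCube : ∀ {d : ℕ} (Q R : ElemCube d), R ∈ (boundaryCube d Q).support →
    ∀ i, R i = Q i ∨ ((Q i).2 = true ∧ (R i = ((Q i).1, false) ∨ R i = ((Q i).1 + 1, false)))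
  | 0, Q, R, h => fun i => i.elim0
  | d + 1, Q, R, h => by
    classical
    rw [boundaryCube] at h
    have h1 := Finsupp.support_add h
    rw [Finset.mem_union] at h1
    rcases h1 with h1 | h1
    · split_ifs at h1 with hb
      · have h2 := Finsupp.support_sub h1
        rw [Finset.mem_union] at h2
        rcases h2 with h2 | h2
        all_goals
          have h3 := Finsupp.support_single_subset h2
          rw [Finset.mem_singleton] at h3
          subst h3
          intro i
          refine Fin.cases ?_ (fun j => ?_) i
          · right
            simp [hb]
          · left
            simp
      · simp at h1
    · have h2 := Finsupp.support_smul h1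
      have h3 := Finsupp.support_sum h2
      simp only [Finset.mem_biUnion] at h3
      obtain ⟨R', hR', h4⟩ := h3
      have h5 := Finsupp.support_single_subset h4
      rw [Finset.mem_singleton] at h5
      subst h5
      intro i
      refine Fin.cases ?_ (fun j => ?_) i
      · left
        simp
      · have := mem_boundaryCube _ _ hR' j
        simpa using this

def seg (k : ℕ) (a : ℤ) : Finset (ℤ × Bool) :=
  (Finset.Icc (a - k) (a + k)) ×ˢ {false} ∪ (Finset.Ico (a - k) (a + k)) ×ˢ {true}

theorem mem_seg {k : ℕ} {a : ℤ} {p : ℤ × Bool} :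
    p ∈ seg k a ↔ a - k ≤ p.1 ∧ p.1 + (if p.2 then 1 else 0) ≤ a + k := by
  obtain ⟨l, b⟩ := p
  cases b <;> simp [seg]

theorem card_seg (k : ℕ) (a : ℤ) : (seg k a).card = 4 * k + 1 := by
  unfold seg
  rw [Finset.card_union_of_disjoint]
  · simp
    omega
  · rw [Finset.disjoint_left]
    rintro ⟨l, b⟩ h1 h2
    simp at h1 h2
    rw [h1.2] at h2
    simp at h2

def box {d : ℕ} (k : ℕ) (x : Fin d → ℤ) : Finset (ElemCube d) :=
  Fintype.piFinset (fun i => seg k (x i))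

theorem mem_box {d k : ℕ} {x : Fin d → ℤ} {Q : ElemCube d} :
    Q ∈ box k x ↔ ∀ i, x i - k ≤ (Q i).1 ∧ (Q i).1 + (if (Q i).2 then 1 else 0) ≤ x i + k := by
  simp only [box, Fintype.mem_piFinset, mem_seg]

theorem card_box {d k : ℕ} (x : Fin d → ℤ) : (box k x).card = (4 * k + 1) ^ d := by
  simp [box, card_seg]

theorem box_closed {d k : ℕ} (x : Fin d → ℤ) : BdC (box k x : Set (ElemCube d)) := by
  intro Q hQ R hR
  have h := mem_boundaryCube Q R hR
  rw [Finset.mem_coe, mem_box] at *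
  intro i
  have h1 := hQ i
  rcases h i with h2 | ⟨h2, h3 | h3⟩
  · rw [h2]; exact h1
  · rw [h3]; simp only [h2] at h1 ⊢; simp at h1 ⊢; omega
  · rw [h3]; simp only [h2] at h1 ⊢; simp at h1 ⊢; omega

theorem cubeSet_subset_lambda {d n : ℕ} (Q : ElemCube d) :
    cubeSet Q ⊆ lambda d n ↔ Q ∈ box n (0 : Fin d → ℤ) := by
  rw [mem_box]
  constructor
  · intro h i
    have h1 : (fun i => ((Q i).1 : ℝ)) ∈ cubeSet Q := by
      intro i
      constructor
      · exact le_rfl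
      · split_ifs <;> simp
    have h2 : (fun i => ((Q i).1 : ℝ) + (if (Q i).2 then 1 else 0)) ∈ cubeSet Q := by
      intro i
      constructor
      · simp only
        split_ifs <;> simp
      · exact le_rfl
    have h3 := (h h1 i).1
    have h4 := (h h2 i).2
    constructor
    · have : (-(n : ℤ) : ℤ) ≤ (Q i).1 := by exact_mod_cast h3
      simpa using this
    · have : (Q i).1 + (if (Q i).2 then 1 else 0) ≤ (n : ℤ) := by
        split_ifs at h4 ⊢ <;> exact_mod_cast h4
      simpa using this
  · intro h y hy i
    obtain ⟨h1, h2⟩ := hy i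
    obtain ⟨h3, h4⟩ := h i
    simp only [Pi.zero_apply, zero_sub, zero_add] at h3 h4
    constructor
    · have : (-(n : ℝ)) ≤ ((Q i).1 : ℝ) := by exact_mod_cast h3
      linarith
    · have : ((Q i).1 : ℝ) + (if (Q i).2 then 1 else 0) ≤ (n : ℝ) := by
        split_ifs at h4 ⊢ <;> exact_mod_cast h4
      linarith

def Sω {d : ℕ} (ω : Config d) (t : ℝ) : Set (ElemCube d) :=
  {Q | ∃ Q' : ElemCube d, cubeSet Q ⊆ cubeSet Q' ∧ (ω Q' : ℝ) ≤ t}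

theorem subset_iff_mid {d : ℕ} (Q Q' : ElemCube d) :
    (fun i => ((Q i).1 : ℝ) + (if (Q i).2 then 1 / 2 else 0)) ∈ cubeSet Q' → cubeSet Q ⊆ cubeSet Q' := by
  intro h y hy i
  obtain ⟨h1, h2⟩ := h i
  obtain ⟨h3, h4⟩ := hy i
  simp only at h1 h2
  have key : ((Q' i).1 : ℝ) ≤ (Q i).1 ∧
      ((Q i).1 : ℝ) + (if (Q i).2 then 1 else 0) ≤ (Q' i).1 + (if (Q' i).2 then 1 else 0) := by
    cases hb : (Q i).2 <;> cases hb' : (Q' i).2 <;> simp only [hb, hb'] at h1 h2 ⊢ <;>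
      simp at h1 h2 ⊢
    · constructor <;> linarith
    · constructor <;> linarith
    · exfalso
      have a1 : (Q' i).1 < (Q i).1 + 1 := by
        have : ((Q' i).1 : ℝ) < (Q i).1 + 1 := by linarith
        exact_mod_cast this
      have a2 : (Q i).1 < (Q' i).1 := by
        have : ((Q i).1 : ℝ) < (Q' i).1 := by linarith
        exact_mod_cast this
      omega
    · have a1 : (Q' i).1 < (Q i).1 + 1 := by
        have : ((Q' i).1 : ℝ) < (Q i).1 + 1 := by linarith
        exact_mod_cast this
      have a2 : (Q i).1 < (Q' i).1 + 1 := by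
        have : ((Q i).1 : ℝ) < (Q' i).1 + 1 := by linarith
        exact_mod_cast this
      have : (Q i).1 = (Q' i).1 := by omega
      rw [this]; simp
  exact ⟨key.1.trans h3, h4.trans key.2⟩

theorem subset_cubSet {d : ℕ} (ω : Config d) (t : ℝ) (Q : ElemCube d) :
    cubeSet Q ⊆ cubSet ω t ↔ Q ∈ Sω ω t := by
  constructor
  · intro h
    have h1 : (fun i => ((Q i).1 : ℝ) + (if (Q i).2 then 1 / 2 else 0)) ∈ cubeSet Q := by
      intro i
      simp only
      constructor <;> split_ifs <;> norm_num
    have h2 := h h1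
    simp only [cubSet, Set.mem_iUnion] at h2
    obtain ⟨Q', h3, h4⟩ := h2
    exact ⟨Q', subset_iff_mid Q Q' h4, h3⟩
  · rintro ⟨Q', h1, h2⟩ y hy
    simp only [cubSet, Set.mem_iUnion]
    exact ⟨Q', h2, h1 hy⟩

theorem bettiN_eq (d q n : ℕ) (t : ℝ) (ω : Config d) :
    bettiN d q n t ω = bS d q (Sω ω t ∩ box n (0 : Fin d → ℤ)) := by
  rw [bettiN, betti_eq]
  congr 1
  ext Q
  rw [Set.mem_ofPred_eq, Set.subset_inter_iff, subset_cubSet, cubeSet_subset_lambda]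
  rfl

theorem bettiN_le (d q n : ℕ) (t : ℝ) (ω : Config d) :
    bettiN d q n t ω ≤ (4 * n + 1) ^ d := by
  rw [bettiN_eq]
  have h := bS_near (q := q) (∅ : Finset ℕ) (S := Sω ω t ∩ box n (0 : Fin d → ℤ))
    (box n (0 : Fin d → ℤ)) Set.inter_subset_right (fun _ => ∅) (by intro x Q hQ; simp at hQ)
    (by simp) (by simp)
  rw [card_box] at h
  simp at h
  exact_mod_cast h

def tEquiv {d : ℕ} (x : Fin d → ℤ) : ElemCube d ≃ ElemCube d where
  toFun := translateCube x
  invFun := translateCube (-x)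
  left_inv Q := by ext i <;> simp [translateCube]
  right_inv Q := by ext i <;> simp [translateCube]

theorem boundaryCube_translate : ∀ {d : ℕ} (x : Fin d → ℤ) (Q : ElemCube d),
    boundaryCube d (translateCube x Q) = Finsupp.mapDomain (translateCube x) (boundaryCube d Q)
  | 0, x, Q => by simp [boundaryCube]
  | d + 1, x, Q => by
    have hc : ∀ (a : ℤ × Bool) (R : ElemCube d), translateCube x (Fin.cons a R) =
        Fin.cons (a.1 + x 0, a.2) (translateCube (fun i => x i.succ) R) := by
      intro a R
      funext i
      refine Fin.cases ?_ (fun j => ?_) i <;> simp [translateCube]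
    have ih := boundaryCube_translate (fun i => x i.succ) (fun i => Q i.succ)
    have e1 : (fun i : Fin d => translateCube x Q i.succ)
        = translateCube (fun i => x i.succ) (fun i => Q i.succ) := rfl
    have e2 : translateCube x Q 0 = ((Q 0).1 + x 0, (Q 0).2) := rfl
    rw [boundaryCube, boundaryCube, e1, ih, e2, Finsupp.mapDomain_add]
    congr 1
    · simp only
      split_ifs
      · rw [sub_eq_add_neg, sub_eq_add_neg, Finsupp.mapDomain_add, ← Finsupp.single_neg,
          ← Finsupp.single_neg, Finsupp.mapDomain_single, Finsupp.mapDomain_single, hc, hc]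
        simp only
        congr 4
        ring
      · simp
    · rw [Finsupp.mapDomain_smul]
      congr 1
      rw [Finsupp.sum_mapDomain_index (by simp) (by simp)]
      rw [Finsupp.sum, Finsupp.sum, Finsupp.mapDomain_finsetSum]
      simp only [Finsupp.mapDomain_single, hc]

theorem boundaryHom_translate {d : ℕ} (x : Fin d → ℤ) (c : CubChain d) :
    boundaryHom d (Finsupp.domLCongr (R := ℤ) (M := ℤ) (tEquiv x) c)
      = Finsupp.domLCongr (R := ℤ) (M := ℤ) (tEquiv x) (boundaryHom d c) := by
  induction c using Finsupp.induction_linear with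
  | zero => simp
  | add f g hf hg => simp only [map_add, hf, hg]
  | single Q n =>
    rw [Finsupp.domLCongr_single]
    simp only [boundaryHom, Finsupp.lsum_single, LinearMap.toSpanSingleton_apply, map_smul]
    congr 1
    rw [Finsupp.domLCongr_apply, Finsupp.domCongr_apply, Finsupp.equivMapDomain_eq_mapDomain]
    exact boundaryCube_translate x Q

theorem cubeDim_translate {d : ℕ} (x : Fin d → ℤ) (Q : ElemCube d) :
    cubeDim (translateCube x Q) = cubeDim Q := rfl

theorem chS_translate {d k : ℕ} (x : Fin d → ℤ) (S : Set (ElemCube d)) :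
    chS d k (translateCube x '' S)
      = (chS d k S).map (Finsupp.domLCongr (R := ℤ) (M := ℤ) (tEquiv x)).toLinearMap := by
  rw [chS, chS, Finsupp.supported_eq_span_single, Finsupp.supported_eq_span_single,
    Submodule.map_span]
  congr 1
  ext c
  simp only [Set.mem_image, LinearEquiv.coe_coe]
  constructor
  · rintro ⟨Q, ⟨h1, R, h2, rfl⟩, rfl⟩
    refine ⟨_, ⟨R, ⟨h1, h2⟩, rfl⟩, ?_⟩
    rw [Finsupp.domLCongr_single]
    rfl
  · rintro ⟨_, ⟨R, ⟨h1, h2⟩, rfl⟩, rfl⟩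
    refine ⟨translateCube x R, ⟨h1, R, h2, rfl⟩, ?_⟩
    rw [Finsupp.domLCongr_single]
    rfl

theorem bS_translate {d q : ℕ} (x : Fin d → ℤ) {S : Set (ElemCube d)} (hS : S.Finite) :
    bS d q (translateCube x '' S) = bS d q S := by
  set E := Finsupp.domLCongr (R := ℤ) (M := ℤ) (tEquiv x) with hE
  have hz : zS d q (translateCube x '' S) = (zS d q S).map E.toLinearMap := by
    unfold zS
    rw [chS_translate]
    ext c
    simp only [Submodule.mem_inf, Submodule.mem_map, LinearMap.mem_ker, LinearEquiv.coe_coe]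
    constructor
    · rintro ⟨⟨b, h1, rfl⟩, h2⟩
      rw [boundaryHom_translate, LinearEquiv.map_eq_zero_iff] at h2
      exact ⟨b, ⟨h1, h2⟩, rfl⟩
    · rintro ⟨b, ⟨h1, h2⟩, rfl⟩
      refine ⟨⟨b, h1, rfl⟩, ?_⟩
      rw [boundaryHom_translate, h2, map_zero]
  have ho : oS d q (translateCube x '' S) = (oS d q S).map E.toLinearMap := by
    unfold oS
    rw [chS_translate, ← Submodule.map_comp, ← Submodule.map_comp]
    congr 1
    apply LinearMap.ext
    intro c
    exact boundaryHom_translate x c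
  have e1 := bS_add (q := q) hS
  have e2 := bS_add (q := q) (hS.image (translateCube x))
  have f1 : Module.finrank ℤ (zS d q (translateCube x '' S)) = Module.finrank ℤ (zS d q S) := by
    rw [hz]
    exact LinearEquiv.finrank_map_eq E _
  have f2 : Module.finrank ℤ ↥(oS d q (translateCube x '' S) ⊓ zS d q (translateCube x '' S))
      = Module.finrank ℤ ↥(oS d q S ⊓ zS d q S) := by
    rw [hz, ho, ← Submodule.map_inf _ E.injective]
    exact LinearEquiv.finrank_map_eq E _
  omega

theorem cubeSet_translate {d : ℕ} (x : Fin d → ℤ) (Q : ElemCube d) (y : Fin d → ℝ) :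
    y ∈ cubeSet (translateCube x Q) ↔ (fun i => y i - x i) ∈ cubeSet Q := by
  refine forall_congr' (fun i => ?_)
  change (((Q i).1 + x i : ℤ) : ℝ) ≤ y i ∧
    y i ≤ (((Q i).1 + x i : ℤ) : ℝ) + (if (Q i).2 then 1 else 0) ↔
    ((Q i).1 : ℝ) ≤ y i - x i ∧ y i - x i ≤ ((Q i).1 : ℝ) + (if (Q i).2 then 1 else 0)
  push_cast
  constructor <;> rintro ⟨h1, h2⟩ <;> constructor <;> linarith

theorem cubeSet_translate_subset {d : ℕ} (x : Fin d → ℤ) (Q Q' : ElemCube d)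
    (h : cubeSet Q ⊆ cubeSet Q') : cubeSet (translateCube x Q) ⊆ cubeSet (translateCube x Q') := by
  intro y hy
  rw [cubeSet_translate] at *
  exact h hy

theorem translate_neg {d : ℕ} (x : Fin d → ℤ) (Q : ElemCube d) :
    translateCube (-x) (translateCube x Q) = Q := (tEquiv x).left_inv Q

theorem translate_neg' {d : ℕ} (x : Fin d → ℤ) (Q : ElemCube d) :
    translateCube x (translateCube (-x) Q) = Q := (tEquiv x).right_inv Q

theorem Sω_shift {d : ℕ} (x : Fin d → ℤ) (ω : Config d) (t : ℝ) (Q : ElemCube d) :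
    Q ∈ Sω (configShift (-x) ω) t ↔ translateCube x Q ∈ Sω ω t := by
  simp only [Sω, Set.mem_ofPred_eq, configShift, neg_neg]
  constructor
  · rintro ⟨Q', h1, h2⟩
    exact ⟨translateCube x Q', cubeSet_translate_subset x _ _ h1, h2⟩
  · rintro ⟨Q', h1, h2⟩
    refine ⟨translateCube (-x) Q', ?_, ?_⟩
    · have := cubeSet_translate_subset (-x) _ _ h1
      rwa [translate_neg] at this
    · rwa [translate_neg']

theorem bS_shift {d q k : ℕ} (x : Fin d → ℤ) (ω : Config d) (t : ℝ) :
    bS d q (Sω ω t ∩ box k x) = bettiN d q k t (configShift (-x) ω) := by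
  rw [bettiN_eq, ← bS_translate x ((box k (0 : Fin d → ℤ)).finite_toSet.inter_of_right _)]
  congr 1
  ext Q
  constructor
  · rintro ⟨h1, h2⟩
    refine ⟨translateCube (-x) Q, ⟨?_, ?_⟩, translate_neg' x Q⟩
    · rw [Sω_shift, translate_neg']; exact h1
    · rw [Finset.mem_coe, mem_box] at *
      intro i
      have := h2 i
      change (0 : ℤ) - k ≤ (Q i).1 + -x i ∧
        (Q i).1 + -x i + (if (Q i).2 then 1 else 0) ≤ (0 : ℤ) + k
      omega
  · rintro ⟨R, ⟨h1, h2⟩, rfl⟩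
    refine ⟨(Sω_shift x ω t R).1 h1, ?_⟩
    rw [Finset.mem_coe, mem_box] at *
    intro i
    have := h2 i
    simp only [Pi.zero_apply] at this
    change x i - k ≤ (R i).1 + x i ∧
        (R i).1 + x i + (if (R i).2 then 1 else 0) ≤ x i + k
    omega

theorem measurable_bettiN (d q n : ℕ) :
    Measurable (fun p : ℝ × Config d => bettiN d q n p.1 p.2) := by
  classical
  let B := box n (0 : Fin d → ℤ)
  let Φ : ℝ × Config d → (B → Prop) := fun p Q => (Q : ElemCube d) ∈ Sω p.2 p.1
  have hΦ : Measurable Φ := by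
    refine measurable_pi_iff.2 (fun Q => ?_)
    refine measurableSet_setOfPred.1 ?_
    have : {p : ℝ × Config d | (Q : ElemCube d) ∈ Sω p.2 p.1}
        = ⋃ Q' : ElemCube d, ⋃ _ : cubeSet (Q : ElemCube d) ⊆ cubeSet Q',
          {p : ℝ × Config d | (p.2 Q' : ℝ) ≤ p.1} := by
      ext p
      simp [Sω]
    rw [this]
    refine MeasurableSet.iUnion (fun Q' => MeasurableSet.iUnion (fun _ => ?_))
    refine measurableSet_le ?_ measurable_fst
    exact measurable_subtype_coe.comp ((measurable_pi_apply Q').comp measurable_snd)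
  let G : (B → Prop) → ℕ := fun u => bS d q {Q | ∃ h : Q ∈ B, u ⟨Q, h⟩}
  have hG : Measurable G := measurable_of_finite G
  have : (fun p : ℝ × Config d => bettiN d q n p.1 p.2) = G ∘ Φ := by
    funext p
    rw [bettiN_eq]
    simp only [G, Φ, Function.comp]
    congr 1
    ext Q
    simp only [Set.mem_inter_iff, Finset.mem_coe, Set.mem_ofPred_eq, B]
    constructor
    · rintro ⟨h1, h2⟩; exact ⟨h2, h1⟩
    · rintro ⟨h1, h2⟩; exact ⟨h2, h1⟩
  rw [this]
  exact hG.comp hΦ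

def Ib (d m : ℕ) : Finset (Fin d → ℤ) := Fintype.piFinset (fun _ => Finset.Icc (-(m : ℤ)) m)

theorem mem_Ib {d m : ℕ} {x : Fin d → ℤ} : x ∈ Ib d m ↔ ∀ i, -(m : ℤ) ≤ x i ∧ x i ≤ m := by
  simp [Ib]

theorem card_Ib (d m : ℕ) : (Ib d m).card = (2 * m + 1) ^ d := by
  simp only [Ib, Fintype.card_piFinset, Int.card_Icc, Finset.prod_const, Finset.card_univ,
    Fintype.card_fin]
  congr 1
  omega

theorem sum_Ib_neg {d m : ℕ} (F : (Fin d → ℤ) → ℝ) :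
    ∑ x ∈ Ib d m, F (-x) = ∑ x ∈ Ib d m, F x := by
  refine Finset.sum_equiv (Equiv.neg _) ?_ ?_
  · intro x
    simp only [mem_Ib, Equiv.neg_apply, Pi.neg_apply]
    refine forall_congr' (fun i => ?_)
    omega
  · intro x _
    rfl

theorem box_disj {d k : ℕ} {x y : Fin d → ℤ} (hxy : x ≠ y)
    (h : ∀ i, x i % (2 * k + 1) = y i % (2 * k + 1)) : Disjoint (box k x) (box k y) := by
  rw [Finset.disjoint_left]
  intro Q h1 h2
  rw [mem_box] at h1 h2
  apply hxy
  funext i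
  have a := h1 i
  have b := h2 i
  have c := h i
  have hd : (2 * (k : ℤ) + 1) ∣ x i - y i := Int.ModEq.dvd (Int.ModEq.symm c)
  obtain ⟨e, he⟩ := hd
  have h3 : |x i - y i| < 2 * k + 1 := by
    rw [abs_lt]
    split_ifs at a b <;> constructor <;> omega
  have h4 := Int.eq_zero_of_abs_lt_dvd ⟨e, he⟩ h3
  omega

theorem bettiN_near {d q k n : ℕ} (hk : k ≤ n) (t : ℝ) (ω : Config d) :
    |((2 * k + 1) ^ d : ℝ) * bettiN d q n t ω
        - ∑ x ∈ Ib d (n - k), (bettiN d q k t (configShift x ω) : ℝ)| ≤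
      (2 * k + 1) ^ d * (4 * n + 1) ^ d - (2 * (n - k) + 1) ^ d * (4 * k + 1) ^ d := by
  classical
  let R : Finset (Fin d → ℤ) := Fintype.piFinset (fun _ => Finset.Ico (0 : ℤ) (2 * k + 1))
  have hR : R.card = (2 * k + 1) ^ d := by
    simp only [R, Fintype.card_piFinset, Int.card_Ico, Finset.prod_const, Finset.card_univ,
      Fintype.card_fin]
    congr 1
  let g : (Fin d → ℤ) → (Fin d → ℤ) := fun x i => x i % (2 * k + 1)
  have hg : ∀ x ∈ Ib d (n - k), g x ∈ R := by
    intro x _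
    simp only [R, g, Fintype.mem_piFinset, Finset.mem_Ico]
    intro i
    exact ⟨Int.emod_nonneg _ (by omega), Int.emod_lt_of_pos _ (by omega)⟩
  have key : ∀ y ∈ R, |(bettiN d q n t ω : ℤ)
      - ∑ x ∈ Ib d (n - k) with g x = y, (bettiN d q k t (configShift (-x) ω) : ℤ)|
      ≤ (4 * n + 1) ^ d - ∑ x ∈ Ib d (n - k) with g x = y, (4 * k + 1 : ℤ) ^ d := by
    intro y _
    have h := bS_near (q := q) ((Ib d (n - k)).filter (fun x => g x = y))
      (S := Sω ω t ∩ box n (0 : Fin d → ℤ))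
      (box n (0 : Fin d → ℤ)) Set.inter_subset_right (fun x => box k x) (fun x => box_closed x)
      (by
        intro x hx Q hQ
        rw [Finset.mem_filter, mem_Ib] at hx
        rw [mem_box] at hQ ⊢
        intro i
        have a := hx.1 i
        have b := hQ i
        simp only [Pi.zero_apply]
        omega)
      (by
        intro x hx x' hx' hne
        rw [Finset.mem_filter] at hx hx'
        refine box_disj hne (fun i => ?_)
        exact congrFun (hx.2.trans hx'.2.symm) i)
    have e : ∀ x ∈ (Ib d (n - k)).filter (fun x => g x = y),
        (bS d q (Sω ω t ∩ box n (0 : Fin d → ℤ) ∩ box k x) : ℤ)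
          = bettiN d q k t (configShift (-x) ω) := by
      intro x hx
      rw [← bS_shift, Set.inter_assoc]
      congr 3
      apply Set.inter_eq_right.2
      intro Q hQ
      rw [Finset.mem_filter, mem_Ib] at hx
      rw [Finset.mem_coe, mem_box] at hQ ⊢
      intro i
      have a := hx.1 i
      have b := hQ i
      simp only [Pi.zero_apply]
      omega
    rw [Finset.sum_congr rfl e, ← bettiN_eq] at h
    simp only [card_box] at h
    push_cast at h
    exact h
  have h2 := (Finset.abs_sum_le_sum_abs (s := R) (f := fun y => (bettiN d q n t ω : ℤ)
      - ∑ x ∈ Ib d (n - k) with g x = y, (bettiN d q k t (configShift (-x) ω) : ℤ))).trans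
      (Finset.sum_le_sum key)
  rw [Finset.sum_sub_distrib, Finset.sum_sub_distrib, Finset.sum_fiberwise_of_maps_to hg,
    Finset.sum_fiberwise_of_maps_to hg] at h2
  simp only [Finset.sum_const, hR, card_Ib] at h2
  rw [← sum_Ib_neg (fun x => (bettiN d q k t (configShift x ω) : ℝ))]
  have h3 : ((|(2 * k + 1) ^ d • (bettiN d q n t ω : ℤ)
      - ∑ x ∈ Ib d (n - k), (bettiN d q k t (configShift (-x) ω) : ℤ)| : ℤ) : ℝ) ≤ _ :=
    Int.cast_le.2 h2
  push_cast [Nat.cast_sub hk, nsmul_eq_mul] at h3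
  exact h3

theorem mem_ball_iff {d r : ℕ} (a z : Fin d → ℤ) :
    z ∈ Metric.closedBall a (r : ℝ) ↔ z - a ∈ Ib d r := by
  rw [Metric.mem_closedBall, dist_pi_le_iff (by positivity), mem_Ib]
  refine forall_congr' (fun i => ?_)
  rw [Int.dist_eq, ← Int.cast_sub, ← Int.cast_abs, ← Int.cast_natCast, Int.cast_le, abs_le]
  rfl

theorem vit {d : ℕ} (u : (Fin d → ℤ) → ℝ) (hu : ∀ x, 0 ≤ u x) (M N : ℕ) (l : ℝ) (hl : 0 < l)
    (D : Finset (Fin d → ℤ)) (hD : D ⊆ Ib d M)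
    (h : ∀ x ∈ D, ∃ n ≤ N, l * (2 * (n : ℝ) + 1) ^ d < ∑ y ∈ Ib d n, u (y + x)) :
    l * D.card ≤ 5 ^ d * ∑ z ∈ Ib d (M + N), u z := by
  classical
  choose! r hr1 hr2 using h
  obtain ⟨U, hUD, hdis, hcov⟩ := Vitali.exists_disjoint_subfamily_covering_enlargement_closedBall
    (D : Set (Fin d → ℤ)) id (fun a => (r a : ℝ)) N
    (fun a ha => by exact_mod_cast hr1 a ha) 5 (by norm_num)
  have hUf : U.Finite := D.finite_toSet.subset hUD
  lift U to Finset (Fin d → ℤ) using hUf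
  let B : (Fin d → ℤ) → ℕ → Finset (Fin d → ℤ) := fun b n => (Ib d n).image (fun y => y + b)
  have hB : ∀ b n z, z ∈ B b n ↔ z ∈ Metric.closedBall b (n : ℝ) := by
    intro b n z
    rw [mem_ball_iff]
    simp only [B, Finset.mem_image]
    constructor
    · rintro ⟨y, hy, rfl⟩; simpa using hy
    · intro hz; exact ⟨z - b, hz, by simp⟩
  have hcov2 : D ⊆ U.biUnion (fun b => B b (5 * r b)) := by
    intro a ha
    obtain ⟨b, hb, hab⟩ := hcov a ha
    rw [Finset.mem_biUnion]
    refine ⟨b, hb, ?_⟩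
    rw [hB]
    have := hab (Metric.mem_closedBall_self (by positivity))
    push_cast
    exact this
  have hcard : (D.card : ℝ) ≤ ∑ b ∈ U, 5 ^ d * (2 * (r b : ℝ) + 1) ^ d := by
    have h1 : D.card ≤ ∑ b ∈ U, (2 * (5 * r b) + 1) ^ d := by
      refine (Finset.card_le_card hcov2).trans (Finset.card_biUnion_le.trans ?_)
      refine Finset.sum_le_sum (fun b _ => ?_)
      rw [← card_Ib]
      exact Finset.card_image_le
    have h2 : (D.card : ℝ) ≤ ∑ b ∈ U, (2 * (5 * (r b : ℝ)) + 1) ^ d := by exact_mod_cast h1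
    refine h2.trans (Finset.sum_le_sum (fun b _ => ?_))
    rw [← mul_pow]
    refine pow_le_pow_left₀ (by positivity) ?_ d
    linarith
  have hdis2 : (U : Set (Fin d → ℤ)).PairwiseDisjoint (fun b => B b (r b)) := by
    intro a ha b hb hab
    have := hdis ha hb hab
    simp only [Function.onFun] at this ⊢
    rw [Finset.disjoint_left]
    intro z h1 h2
    rw [hB] at h1 h2
    exact Set.disjoint_left.1 this h1 h2
  have hsub : U.biUnion (fun b => B b (r b)) ⊆ Ib d (M + N) := by
    intro z hz
    rw [Finset.mem_biUnion] at hz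
    obtain ⟨b, hb, hz⟩ := hz
    rw [hB, mem_ball_iff, mem_Ib] at hz
    have h1 := hD (hUD hb)
    have h2 := hr1 b (hUD hb)
    rw [mem_Ib] at h1 ⊢
    intro i
    have := hz i
    have := h1 i
    simp only [Pi.sub_apply] at *
    push_cast
    omega
  calc l * D.card ≤ l * ∑ b ∈ U, 5 ^ d * (2 * (r b : ℝ) + 1) ^ d := by gcongr
    _ = 5 ^ d * ∑ b ∈ U, l * (2 * (r b : ℝ) + 1) ^ d := by
        rw [← Finset.mul_sum, ← Finset.mul_sum]; ring
    _ ≤ 5 ^ d * ∑ b ∈ U, ∑ z ∈ B b (r b), u z := by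
        gcongr with b hb
        refine (hr2 b (hUD hb)).le.trans (le_of_eq ?_)
        rw [Finset.sum_image]
        intro y _ y' _ h
        simpa using h
    _ = 5 ^ d * ∑ z ∈ U.biUnion (fun b => B b (r b)), u z := by
        rw [Finset.sum_biUnion hdis2]
    _ ≤ 5 ^ d * ∑ z ∈ Ib d (M + N), u z := by
        gcongr
        exact fun z _ _ => hu z

theorem shift_add {d : ℕ} (x y : Fin d → ℤ) (ω : Config d) :
    configShift x (configShift y ω) = configShift (x + y) ω := by
  funext Q
  simp only [configShift]
  congr 1
  funext i
  simp only [translateCube, Pi.neg_apply, Pi.add_apply]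
  congr 1
  ring

theorem shift_zero {d : ℕ} (ω : Config d) : configShift 0 ω = ω := by
  funext Q
  simp only [configShift, neg_zero]
  congr 1
  funext i
  simp [translateCube]

theorem measurable_shift {d : ℕ} (x : Fin d → ℤ) : Measurable (configShift (d := d) x) :=
  measurable_pi_iff.2 (fun _ => measurable_pi_apply _)

theorem mp_shift {d : ℕ} {P : Measure (Config d)} (hs : Stationary P) (x : Fin d → ℤ) :
    MeasurePreserving (configShift x) P P := by
  refine ⟨measurable_shift x, ?_⟩
  ext A hA
  rw [Measure.map_apply (measurable_shift x) hA]
  exact hs x A hA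

theorem integral_shift {d : ℕ} {P : Measure (Config d)} (hs : Stationary P) (x : Fin d → ℤ)
    {f : Config d → ℝ} (hf : Measurable f) : ∫ ω, f (configShift x ω) ∂P = ∫ ω, f ω ∂P := by
  have h := integral_map (μ := P) (measurable_shift x).aemeasurable (f := f)
    hf.aestronglyMeasurable
  rw [(mp_shift hs x).map_eq] at h
  exact h.symm

theorem integrable_bdd {d : ℕ} {P : Measure (Config d)} [IsProbabilityMeasure P]
    {f : Config d → ℝ} (hf : Measurable f) {C : ℝ} (hC : ∀ ω, |f ω| ≤ C) : Integrable f P :=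
  Integrable.of_bound hf.aestronglyMeasurable C (Eventually.of_forall hC)

theorem ratio_lim (a b c e : ℝ) (hc : c ≠ 0) (d : ℕ) :
    Tendsto (fun n : ℕ => ((a * n + b) / (c * n + e)) ^ d) atTop (𝓝 ((a / c) ^ d)) := by
  have h := (tendsto_add_mul_div_add_mul_atTop_nhds b e a hc).pow d
  simpa only [add_comm] using h

theorem maximal {d : ℕ} {P : Measure (Config d)} [IsProbabilityMeasure P] (hs : Stationary P)
    {h : Config d → ℝ} (hm : Measurable h) (h0 : ∀ ω, 0 ≤ h ω) {C : ℝ} (hC : ∀ ω, |h ω| ≤ C)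
    {l : ℝ} (hl : 0 < l) :
    P {ω | ∃ n : ℕ, l * (2 * (n : ℝ) + 1) ^ d < ∑ y ∈ Ib d n, h (configShift y ω)}
      ≤ ENNReal.ofReal (5 ^ d / l * ∫ ω, h ω ∂P) := by
  classical
  let E : ℕ → Set (Config d) := fun N =>
    {ω | ∃ n ≤ N, l * (2 * (n : ℝ) + 1) ^ d < ∑ y ∈ Ib d n, h (configShift y ω)}
  have hEm : ∀ N, MeasurableSet (E N) := by
    intro N
    have : E N = ⋃ n : ℕ, ⋃ _ : n ≤ N,
      {ω | l * (2 * (n : ℝ) + 1) ^ d < ∑ y ∈ Ib d n, h (configShift y ω)} := by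
      ext ω; simp [E]
    rw [this]
    refine MeasurableSet.iUnion (fun n => MeasurableSet.iUnion (fun _ => ?_))
    refine measurableSet_lt measurable_const ?_
    exact Finset.measurable_sum _ (fun y _ => hm.comp (measurable_shift y))
  have hmono : Monotone E := by
    intro N N' hN ω hω
    obtain ⟨n, hn, h1⟩ := hω
    exact ⟨n, hn.trans hN, h1⟩
  have hU : {ω | ∃ n : ℕ, l * (2 * (n : ℝ) + 1) ^ d < ∑ y ∈ Ib d n, h (configShift y ω)}
      = ⋃ N, E N := by
    ext ω
    simp only [Set.mem_ofPred_eq, Set.mem_iUnion, E]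
    constructor
    · rintro ⟨n, hn⟩; exact ⟨n, n, le_rfl, hn⟩
    · rintro ⟨N, n, _, hn⟩; exact ⟨n, hn⟩
  rw [hU, hmono.measure_iUnion]
  refine iSup_le (fun N => ?_)
  have hfin : P (E N) ≠ ⊤ := measure_ne_top _ _
  rw [← ENNReal.ofReal_toReal hfin]
  apply ENNReal.ofReal_le_ofReal
  have hint : Integrable h P := integrable_bdd hm hC
  have step : ∀ M : ℕ, l * ((2 * (M : ℝ) + 1) ^ d * (P (E N)).toReal)
      ≤ 5 ^ d * ((2 * ((M : ℝ) + N) + 1) ^ d * ∫ ω, h ω ∂P) := by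
    intro M
    let ind : Config d → ℝ := (E N).indicator (fun _ => 1)
    have hind : Measurable ind := measurable_const.indicator (hEm N)
    have hindi : ∀ x, Integrable (fun ω => ind (configShift x ω)) P := by
      intro x
      refine integrable_bdd (hind.comp (measurable_shift x)) (C := 1) (fun ω => ?_)
      simp only [ind, Set.indicator]
      split_ifs <;> simp
    have hhi : ∀ x, Integrable (fun ω => h (configShift x ω)) P := fun x =>
      integrable_bdd (hm.comp (measurable_shift x)) (C := C) (fun ω => hC _)
    have pw : ∀ ω, l * ∑ x ∈ Ib d M, ind (configShift x ω)
        ≤ 5 ^ d * ∑ z ∈ Ib d (M + N), h (configShift z ω) := by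
      intro ω
      have h1 : ∑ x ∈ Ib d M, ind (configShift x ω)
          = (((Ib d M).filter (fun x => configShift x ω ∈ E N)).card : ℝ) := by
        rw [Finset.card_filter]
        push_cast
        refine Finset.sum_congr rfl (fun x _ => ?_)
        simp only [ind, Set.indicator]
        split_ifs <;> rfl
      rw [h1]
      refine vit (fun z => h (configShift z ω)) (fun z => h0 _) M N l hl _
        (Finset.filter_subset _ _) ?_
      intro x hx
      obtain ⟨n, hn, h2⟩ := (Finset.mem_filter.1 hx).2
      refine ⟨n, hn, ?_⟩
      simp only [shift_add] at h2
      exact h2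
    have h3 := integral_mono (μ := P)
      ((integrable_finsetSum (Ib d M) (fun x _ => hindi x)).const_mul l)
      ((integrable_finsetSum (Ib d (M + N)) (fun x _ => hhi x)).const_mul (5 ^ d)) pw
    rw [integral_const_mul, integral_const_mul, integral_finsetSum _ (fun x _ => hindi x),
      integral_finsetSum _ (fun x _ => hhi x)] at h3
    simp only [integral_shift hs _ hind, integral_shift hs _ hm, Finset.sum_const, card_Ib,
      nsmul_eq_mul] at h3
    have h4 : ∫ ω, ind ω ∂P = (P (E N)).toReal := by
      simp only [ind]
      rw [integral_indicator (hEm N)]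
      simp [Measure.real]
    rw [h4] at h3
    push_cast at h3
    exact h3
  have lim : Tendsto (fun M : ℕ => 5 ^ d / l * (∫ ω, h ω ∂P)
      * ((2 * (M : ℝ) + (2 * N + 1)) / (2 * M + 1)) ^ d) atTop
      (𝓝 (5 ^ d / l * (∫ ω, h ω ∂P) * (2 / 2) ^ d)) :=
    (ratio_lim 2 (2 * N + 1) 2 1 (by norm_num) d).const_mul _
  rw [div_self (by norm_num), one_pow, mul_one] at lim
  refine ge_of_tendsto' lim (fun M => ?_)
  have hp : (0 : ℝ) < (2 * (M : ℝ) + 1) ^ d := by positivity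
  rw [div_pow, div_mul_eq_mul_div, div_mul_div_comm, le_div_iff₀ (by positivity)]
  have := step M
  have e : (2 * ((M : ℝ) + N) + 1) = 2 * (M : ℝ) + (2 * N + 1) := by ring
  rw [e] at this
  linarith

def Good {d : ℕ} (g : Config d → ℝ) : Prop :=
  Measurable g ∧ (∃ C : ℝ, ∀ ω, |g ω| ≤ C) ∧
    ∀ ω, Tendsto (fun n : ℕ => ((2 * (n : ℝ) + 1) ^ d)⁻¹ * ∑ x ∈ Ib d n, g (configShift x ω))
      atTop (𝓝 0)

theorem Good.add {d : ℕ} {g g' : Config d → ℝ} (h : Good g) (h' : Good g') :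
    Good (g + g') := by
  obtain ⟨m, ⟨C, hC⟩, l⟩ := h
  obtain ⟨m', ⟨C', hC'⟩, l'⟩ := h'
  refine ⟨m.add m', ⟨C + C', fun ω => (abs_add_le _ _).trans (add_le_add (hC ω) (hC' ω))⟩, ?_⟩
  intro ω
  have := (l ω).add (l' ω)
  simpa only [Pi.add_apply, Finset.sum_add_distrib, mul_add, add_zero] using this

theorem Good.smul {d : ℕ} {g : Config d → ℝ} (h : Good g) (c : ℝ) : Good (c • g) := by
  obtain ⟨m, ⟨C, hC⟩, l⟩ := h
  refine ⟨m.const_smul c, ⟨|c| * C, fun ω => ?_⟩, ?_⟩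
  · simp only [Pi.smul_apply, smul_eq_mul, abs_mul]
    exact mul_le_mul_of_nonneg_left (hC ω) (abs_nonneg c)
  intro ω
  have := (l ω).const_mul c
  rw [mul_zero] at this
  refine this.congr (fun n => ?_)
  simp only [Pi.smul_apply, smul_eq_mul, ← Finset.mul_sum]
  ring

theorem Good.zero {d : ℕ} : Good (0 : Config d → ℝ) :=
  ⟨measurable_zero, ⟨0, by simp⟩, by simp⟩

theorem Good.cobound {d : ℕ} {g : Config d → ℝ} (hg : Measurable g) {C : ℝ}
    (hC : ∀ ω, |g ω| ≤ C) (x : Fin d → ℤ) : Good (fun ω => g (configShift x ω) - g ω) := by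
  classical
  refine ⟨(hg.comp (measurable_shift x)).sub hg, ⟨C + C, fun ω => ?_⟩, ?_⟩
  · exact (abs_sub _ _).trans (add_le_add (hC _) (hC _))
  intro ω
  obtain ⟨r, hr⟩ : ∃ r : ℕ, x ∈ Ib d r := by
    refine ⟨∑ i, (x i).natAbs, ?_⟩
    rw [mem_Ib]
    intro i
    have : (x i).natAbs ≤ ∑ i, (x i).natAbs :=
      Finset.single_le_sum (f := fun i => (x i).natAbs) (fun _ _ => Nat.zero_le _)
        (Finset.mem_univ i)
    omega
  have sub : ∀ (n : ℕ) (S : Finset (Fin d → ℤ)), S ⊆ Ib d (n + r) → S.card = (2 * n + 1) ^ d →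
      |∑ z ∈ Ib d (n + r), g (configShift z ω) - ∑ z ∈ S, g (configShift z ω)|
        ≤ C * ((2 * ((n : ℝ) + r) + 1) ^ d - (2 * (n : ℝ) + 1) ^ d) := by
    intro n S hS hc
    rw [← Finset.sum_sdiff hS, add_sub_cancel_right]
    refine (Finset.abs_sum_le_sum_abs _ _).trans ?_
    refine (Finset.sum_le_sum (fun z _ => hC _)).trans ?_
    have := Finset.card_sdiff_add_card_eq_card hS
    rw [hc, card_Ib] at this
    have h2 : (((Ib d (n + r) \ S).card : ℝ)) + (2 * (n : ℝ) + 1) ^ d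
      = (2 * ((n : ℝ) + r) + 1) ^ d := by exact_mod_cast this
    rw [Finset.sum_const, nsmul_eq_mul, ← h2]
    apply le_of_eq
    ring
  have bd : ∀ n : ℕ, |((2 * (n : ℝ) + 1) ^ d)⁻¹ *
      ∑ y ∈ Ib d n, (g (configShift x (configShift y ω)) - g (configShift y ω))|
      ≤ 2 * C * (((2 * (n : ℝ) + (2 * r + 1)) / (2 * n + 1)) ^ d - 1) := by
    intro n
    have h1 := sub n ((Ib d n).image (fun y => x + y)) (by
      intro z hz
      obtain ⟨y, hy, rfl⟩ := Finset.mem_image.1 hz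
      rw [mem_Ib] at *
      intro i
      have := hy i
      have := hr i
      simp only [Pi.add_apply]
      push_cast
      omega) (by
      rw [Finset.card_image_of_injective _ (add_right_injective x), card_Ib])
    have h2 := sub n (Ib d n) (by
      intro y hy
      rw [mem_Ib] at *
      intro i
      have := hy i
      push_cast
      omega) (card_Ib d n)
    rw [Finset.sum_image (fun a _ b _ h => add_right_injective x h)] at h1
    simp only [shift_add]
    rw [Finset.sum_sub_distrib, abs_mul, abs_of_pos (a := ((2 * (n : ℝ) + 1) ^ d)⁻¹) (by positivity),
      div_pow, inv_mul_le_iff₀ (by positivity)]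
    have hp : (2 * (n : ℝ) + 1) ^ d ≠ 0 := by positivity
    have e : (2 * ((n : ℝ) + r) + 1) = 2 * (n : ℝ) + (2 * r + 1) := by ring
    rw [e] at h1 h2
    have e2 : (2 * (n : ℝ) + 1) ^ d * (2 * C * ((2 * (n : ℝ) + (2 * r + 1)) ^ d
        / (2 * n + 1) ^ d - 1))
        = 2 * (C * ((2 * (n : ℝ) + (2 * r + 1)) ^ d - (2 * (n : ℝ) + 1) ^ d)) := by
      field_simp
    rw [e2]
    rw [abs_le] at *
    constructor <;> linarith
  have lim := ((ratio_lim 2 (2 * r + 1) 2 1 (by norm_num) d).sub_const 1).const_mul (2 * C)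
  rw [div_self (by norm_num), one_pow, sub_self, mul_zero] at lim
  exact squeeze_zero_norm bd lim

theorem le_of_forall_pos_ofReal_le {a : ENNReal}
    (h : ∀ ε : ℝ, 0 < ε → a ≤ ENNReal.ofReal ε) : a ≤ 0 := by
  refine ENNReal.le_of_forall_pos_le_add (fun ε hε _ => ?_)
  have := h ε (by exact_mod_cast hε)
  simpa using this

theorem MemLp_bdd {d : ℕ} {P : Measure (Config d)} [IsProbabilityMeasure P]
    {f : Config d → ℝ} (hf : Measurable f) {C : ℝ} (hC : ∀ ω, |f ω| ≤ C) : MemLp f 2 P :=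
  MemLp.of_bound hf.aestronglyMeasurable C (Eventually.of_forall hC)

def KK {d : ℕ} (P : Measure (Config d)) : Submodule ℝ (Lp ℝ 2 P) where
  carrier := {F | ∃ g : Config d → ℝ, Good g ∧ (F : Config d → ℝ) =ᵐ[P] g}
  add_mem' := by
    rintro F F' ⟨g, hg, h⟩ ⟨g', hg', h'⟩
    exact ⟨g + g', hg.add hg', (Lp.coeFn_add F F').trans (h.add h')⟩
  zero_mem' := ⟨0, Good.zero, Lp.coeFn_zero _ _ _⟩
  smul_mem' := by
    rintro c F ⟨g, hg, h⟩
    exact ⟨c • g, hg.smul c, (Lp.coeFn_smul c F).trans (h.const_smul c)⟩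

theorem ae_const_of_inv {d : ℕ} {P : Measure (Config d)} [IsProbabilityMeasure P]
    (hs : Stationary P) (he : ErgodicConfig P) {H : Config d → ℝ} (hH : Measurable H)
    (hinv : ∀ x, (fun ω => H (configShift x ω)) =ᵐ[P] H) : ∃ a, H =ᵐ[P] Function.const _ a := by
  refine exists_eventuallyEq_const_of_forall_separating MeasurableSet ?_
  intro U hU
  let B : Set (Config d) := ⋂ x : Fin d → ℤ, {ω | H (configShift x ω) ∈ U}
  have hBm : MeasurableSet B :=
    MeasurableSet.iInter (fun x => (hH.comp (measurable_shift x)) hU)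
  have hBi : ∀ y, configShift y ⁻¹' B = B := by
    intro y
    ext ω
    simp only [B, Set.mem_preimage, Set.mem_iInter, Set.mem_ofPred_eq, shift_add]
    constructor
    · intro h x
      have := h (x - y)
      rwa [sub_add_cancel] at this
    · intro h x
      exact h (x + y)
  have hall : ∀ᵐ ω ∂P, ∀ x, H (configShift x ω) = H ω := ae_all_iff.2 hinv
  have hB2 : ∀ᵐ ω ∂P, (ω ∈ B ↔ H ω ∈ U) := by
    filter_upwards [hall] with ω hω
    simp only [B, Set.mem_iInter, Set.mem_ofPred_eq, hω]
    simp
  rcases he B hBm hBi with h | h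
  · right
    have : ∀ᵐ ω ∂P, ω ∉ B := measure_eq_zero_iff_ae_notMem.1 h
    filter_upwards [this, hB2] with ω h1 h2
    rwa [← h2]
  · left
    have : ∀ᵐ ω ∂P, ω ∈ B := (mem_ae_iff_prob_eq_one hBm).2 h
    filter_upwards [this, hB2] with ω h1 h2
    rwa [← h2]

theorem orth_inv {d : ℕ} {P : Measure (Config d)} [IsProbabilityMeasure P]
    (hs : Stationary P) (h : Lp ℝ 2 P) (hh : h ∈ (KK P)ᗮ) (x : Fin d → ℤ) :
    (fun ω => h (configShift x ω)) =ᵐ[P] h := by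
  have hHm : Measurable (h : Config d → ℝ) := (Lp.stronglyMeasurable h).measurable
  have hHi : Integrable (h : Config d → ℝ) P := (Lp.memLp h).integrable (by norm_num)
  have hHi2 : Integrable (fun ω => h (configShift x ω)) P :=
    (mp_shift hs x).integrable_comp_of_integrable hHi
  refine Integrable.ae_eq_of_forall_setIntegral_eq _ _ hHi2 hHi ?_
  intro B hB _
  let A : Set (Config d) := configShift (-x) ⁻¹' B
  have hA : MeasurableSet A := measurable_shift (-x) hB
  have hAB : configShift x ⁻¹' A = B := by
    ext ω
    simp only [A, Set.mem_preimage, shift_add, neg_add_cancel, shift_zero]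
  have e1 : ∫ ω in A, h ω ∂P = ∫ ω in B, h (configShift x ω) ∂P := by
    have := setIntegral_map (μ := P) (g := configShift x) (f := (h : Config d → ℝ)) hA
      hHm.aestronglyMeasurable (measurable_shift x).aemeasurable
    rwa [(mp_shift hs x).map_eq, hAB] at this
  rw [← e1]
  let ind : Config d → ℝ := A.indicator (fun _ => 1)
  have hind : Measurable ind := measurable_const.indicator hA
  have hb : ∀ ω, |ind ω| ≤ 1 := by
    intro ω
    simp only [ind, Set.indicator]
    split_ifs <;> simp
  have hgood := Good.cobound hind hb x
  obtain ⟨C, hC⟩ := hgood.2.1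
  have hmem := MemLp_bdd (P := P) hgood.1 hC
  have horth := (Submodule.mem_orthogonal _ h).1 hh (hmem.toLp _) ⟨_, hgood, hmem.coeFn_toLp⟩
  rw [L2.inner_def] at horth
  have e2 : ∫ ω, inner ℝ ((hmem.toLp _ : Lp ℝ 2 P) ω) (h ω) ∂P
      = ∫ ω, (B.indicator h ω - A.indicator h ω) ∂P := by
    refine integral_congr_ae ?_
    filter_upwards [hmem.coeFn_toLp] with ω hω
    rw [hω]
    have h1 : configShift x ω ∈ A ↔ ω ∈ B := by rw [← hAB]; rfl
    by_cases c1 : ω ∈ B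
    · have c3 := h1.2 c1
      by_cases c2 : ω ∈ A <;> simp [ind, c1, c2, c3]
    · have c3 : configShift x ω ∉ A := fun h => c1 (h1.1 h)
      by_cases c2 : ω ∈ A <;> simp [ind, c1, c2, c3]
  rw [e2, integral_sub (hHi.indicator hB) (hHi.indicator hA), integral_indicator hB,
    integral_indicator hA] at horth
  linarith

theorem approx {d : ℕ} {P : Measure (Config d)} [IsProbabilityMeasure P]
    (hs : Stationary P) (he : ErgodicConfig P) {f : Config d → ℝ} (hf : Measurable f) {C : ℝ}
    (hC : ∀ ω, |f ω| ≤ C) {ε : ℝ} (hε : 0 < ε) :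
    ∃ g, Good g ∧ ∫ ω, |f ω - (∫ ω', f ω' ∂P) - g ω| ∂P ≤ ε := by
  set m := ∫ ω', f ω' ∂P with hmdef
  have hfm : Measurable (fun ω => f ω - m) := hf.sub_const m
  have hfb : ∀ ω, |f ω - m| ≤ C + |m| := fun ω =>
    (abs_sub _ _).trans (add_le_add (hC ω) le_rfl)
  have hmem := MemLp_bdd (P := P) hfm hfb
  let F : Lp ℝ 2 P := hmem.toLp _
  have hF : F ∈ (KK P)ᗮᗮ := by
    rw [Submodule.mem_orthogonal]
    intro h hh
    obtain ⟨a, ha⟩ := ae_const_of_inv hs he (Lp.stronglyMeasurable h).measurable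
      (orth_inv hs h hh)
    rw [L2.inner_def]
    have : ∫ ω, inner ℝ (h ω) (F ω) ∂P = ∫ ω, a * (f ω - m) ∂P := by
      refine integral_congr_ae ?_
      filter_upwards [ha, hmem.coeFn_toLp] with ω h1 h2
      rw [h1, h2]
      simp [mul_comm]
    rw [this, integral_const_mul, integral_sub (integrable_bdd hf hC) (integrable_const _)]
    simp [hmdef]
  rw [Submodule.orthogonal_orthogonal_eq_closure] at hF
  obtain ⟨G, ⟨g, hg, hGg⟩, hd⟩ := Metric.mem_closure_iff.1 hF ε hε
  refine ⟨g, hg, ?_⟩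
  obtain ⟨Cg, hCg⟩ := hg.2.1
  have hφm : Measurable (fun ω => f ω - m - g ω) := hfm.sub hg.1
  have hφb : ∀ ω, |f ω - m - g ω| ≤ C + |m| + Cg := fun ω =>
    (abs_sub _ _).trans (add_le_add (hfb ω) (hCg ω))
  have h2 := MemLp_bdd (P := P) hφm hφb
  rw [Lp.dist_def] at hd
  have e : eLpNorm ((F : Config d → ℝ) - (G : Config d → ℝ)) 2 P
      = eLpNorm (fun ω => f ω - m - g ω) 2 P := by
    refine eLpNorm_congr_ae ?_
    filter_upwards [hmem.coeFn_toLp, hGg] with ω h3 h4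
    simp only [Pi.sub_apply, F, h3, h4]
  rw [e] at hd
  have h3 : ∫ ω, |f ω - m - g ω| ∂P = (eLpNorm (fun ω => f ω - m - g ω) 1 P).toReal := by
    rw [eLpNorm_one_eq_lintegral_enorm, ← integral_norm_eq_lintegral_enorm
      hφm.aestronglyMeasurable]
    rfl
  rw [h3]
  refine le_trans ?_ hd.le
  exact ENNReal.toReal_mono h2.eLpNorm_ne_top
    (eLpNorm_le_eLpNorm_of_exponent_le (by norm_num) hφm.aestronglyMeasurable)

theorem ergodic_thm {d : ℕ} {P : Measure (Config d)} [IsProbabilityMeasure P]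
    (hs : Stationary P) (he : ErgodicConfig P) {f : Config d → ℝ} (hf : Measurable f) {C : ℝ}
    (hC : ∀ ω, |f ω| ≤ C) :
    ∀ᵐ ω ∂P, Tendsto (fun n : ℕ => ((2 * (n : ℝ) + 1) ^ d)⁻¹ *
      ∑ x ∈ Ib d n, f (configShift x ω)) atTop (𝓝 (∫ ω', f ω' ∂P)) := by
  set m := ∫ ω', f ω' ∂P with hmdef
  let A : ℕ → Config d → ℝ := fun n ω => ((2 * (n : ℝ) + 1) ^ d)⁻¹ *
      ∑ x ∈ Ib d n, f (configShift x ω)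
  have main : ∀ l : ℝ, 0 < l → ∀ᵐ ω ∂P, ∀ᶠ n in atTop, |A n ω - m| ≤ 2 * l := by
    intro l hl
    rw [ae_iff, ← nonpos_iff_eq_zero]
    refine le_of_forall_pos_ofReal_le ?_
    intro ε hε
    obtain ⟨g, hg, hgε⟩ := approx hs he hf hC (ε := ε * l / 5 ^ d) (by positivity)
    obtain ⟨Cg, hCg⟩ := hg.2.1
    have hφm : Measurable (fun ω => |f ω - m - g ω|) := ((hf.sub_const m).sub hg.1).abs
    have hφb : ∀ ω, |(|f ω - m - g ω|)| ≤ C + |m| + Cg := fun ω => by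
      rw [abs_abs]
      exact (abs_sub _ _).trans (add_le_add ((abs_sub _ _).trans (add_le_add (hC ω) le_rfl)) (hCg ω))
    have hmax := maximal hs hφm (fun ω => abs_nonneg _) hφb hl
    have hle : 5 ^ d / l * ∫ ω, |f ω - m - g ω| ∂P ≤ ε := by
      refine (mul_le_mul_of_nonneg_left hgε (by positivity)).trans (le_of_eq ?_)
      field_simp
    refine le_trans (measure_mono ?_) (hmax.trans (ENNReal.ofReal_le_ofReal hle))
    intro ω hω
    by_contra hcon
    apply hω
    simp only [Set.mem_ofPred_eq, not_exists, not_lt] at hcon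
    have h1 := Metric.tendsto_atTop.1 (hg.2.2 ω) l hl
    obtain ⟨N, hN⟩ := h1
    refine eventually_atTop.2 ⟨N, fun n hn => ?_⟩
    have h2 := hN n hn
    rw [Real.dist_eq, sub_zero] at h2
    have h3 := hcon n
    have hp : (0 : ℝ) < (2 * (n : ℝ) + 1) ^ d := by positivity
    have h4 : A n ω - m = ((2 * (n : ℝ) + 1) ^ d)⁻¹ * ∑ x ∈ Ib d n, g (configShift x ω)
        + ((2 * (n : ℝ) + 1) ^ d)⁻¹ * ∑ x ∈ Ib d n,
          (f (configShift x ω) - m - g (configShift x ω)) := by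
      simp only [A, Finset.sum_sub_distrib, Finset.sum_const, card_Ib, nsmul_eq_mul]
      push_cast
      field_simp
      ring
    rw [h4]
    refine (abs_add_le _ _).trans ?_
    have h5 : |((2 * (n : ℝ) + 1) ^ d)⁻¹ * ∑ x ∈ Ib d n,
          (f (configShift x ω) - m - g (configShift x ω))| ≤ l := by
      rw [abs_mul, abs_of_pos (inv_pos.2 hp), inv_mul_le_iff₀ hp, mul_comm]
      exact (Finset.abs_sum_le_sum_abs _ _).trans h3
    linarith
  have main2 : ∀ᵐ ω ∂P, ∀ j : ℕ, ∀ᶠ n in atTop, |A n ω - m| ≤ 2 * (1 / ((j : ℝ) + 1)) :=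
    ae_all_iff.2 (fun j => main _ (by positivity))
  filter_upwards [main2] with ω hω
  rw [Metric.tendsto_atTop]
  intro ε hε
  obtain ⟨j, hj⟩ := exists_nat_one_div_lt (half_pos hε)
  obtain ⟨N, hN⟩ := eventually_atTop.1 (hω j)
  refine ⟨N, fun n hn => ?_⟩
  rw [Real.dist_eq]
  have := hN n hn
  simp only [A] at this
  linarith

theorem avg_bound {α : Type*} [MeasurableSpace α] (μ : Measure α) [IsProbabilityMeasure μ]
    {f g : α → ℝ} (hf : Integrable f μ) (hg : Integrable g μ) {R : ℝ}
    (h : ∀ a, |f a - g a| ≤ R) : |∫ a, f a ∂μ - ∫ a, g a ∂μ| ≤ R := by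
  rw [← integral_sub hf hg]
  have := norm_integral_le_of_norm_le_const (μ := μ) (f := fun a => f a - g a) (C := R)
    (Eventually.of_forall h)
  simpa using this

abbrev mu01 : Measure ℝ := (volume : Measure ℝ).restrict (Set.Ioc 0 1)

instance : IsProbabilityMeasure mu01 := ⟨by simp [mu01]⟩

def epsk (d k : ℕ) : ℝ := 2 ^ d - ((4 * (k : ℝ) + 1) / (2 * k + 1)) ^ d

theorem epsk_lim (d : ℕ) : Tendsto (epsk d) atTop (𝓝 0) := by
  have h := (ratio_lim 4 1 2 1 (by norm_num) d).const_sub ((2 : ℝ) ^ d)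
  norm_num at h
  exact h

theorem squeeze_near (d k : ℕ) (u S : ℕ → ℝ) (m : ℝ)
    (h : ∀ n, k ≤ n → |((2 * k + 1) ^ d : ℝ) * u n - S (n - k)| ≤
      (2 * k + 1) ^ d * (4 * n + 1) ^ d - (2 * (n - k) + 1) ^ d * (4 * k + 1) ^ d)
    (hS : Tendsto (fun n : ℕ => ((2 * (n : ℝ) + 1) ^ d)⁻¹ * S n) atTop (𝓝 m))
    {δ : ℝ} (hδ : 0 < δ) :
    ∀ᶠ n : ℕ in atTop, |((2 * (n : ℝ)) ^ d)⁻¹ * u n - m / (2 * k + 1) ^ d| ≤ epsk d k + δ := by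
  have hK : (0 : ℝ) < (2 * k + 1) ^ d := by positivity
  have l1 := ratio_lim 4 1 2 0 (by norm_num) d
  have l2 := ratio_lim 2 (-(2 * k) + 1) 2 0 (by norm_num) d
  have l3 := hS.comp (tendsto_sub_atTop_nat k)
  have l4 := ((l2.mul l3).sub_const m).abs
  have l5 := (((l1.const_mul ((2 * k + 1 : ℝ) ^ d)).sub
    (l2.mul_const ((4 * k + 1 : ℝ) ^ d))).add l4).div_const ((2 * k + 1 : ℝ) ^ d)
  have e : ((2 * k + 1 : ℝ) ^ d * (4 / 2) ^ d - (2 / 2) ^ d * (4 * k + 1) ^ d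
      + |(2 / 2) ^ d * m - m|) / (2 * k + 1) ^ d = epsk d k := by
    unfold epsk
    norm_num
    rw [div_pow, sub_div, mul_div_cancel_left₀ _ hK.ne']
  rw [e] at l5
  filter_upwards [l5.eventually_lt_const (show epsk d k < epsk d k + δ by linarith),
    eventually_ge_atTop k, eventually_ge_atTop 1] with n hn hkn h1n
  refine le_trans ?_ hn.le
  have hn0 : (0 : ℝ) < 2 * n := by
    have : (1 : ℝ) ≤ n := by exact_mod_cast h1n
    linarith
  have hN : (0 : ℝ) < (2 * n) ^ d := by positivity
  have hc : ((n - k : ℕ) : ℝ) = n - k := by push_cast [hkn]; ring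
  have hM : (0 : ℝ) < (2 * (n - k : ℝ) + 1) ^ d := by
    have : (k : ℝ) ≤ n := by exact_mod_cast hkn
    have : (0 : ℝ) < 2 * (n - k : ℝ) + 1 := by linarith
    positivity
  simp only [Function.comp, hc, add_zero, div_pow]
  have e1 : (2 * (n : ℝ) + (-(2 * k) + 1)) ^ d = (2 * (n - k : ℝ) + 1) ^ d := by ring
  rw [e1]
  have e2 : (2 * (n - k : ℝ) + 1) ^ d / (2 * n) ^ d * (((2 * (n - k : ℝ) + 1) ^ d)⁻¹ * S (n - k))
      = S (n - k) / (2 * n) ^ d := by field_simp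
  rw [e2, le_div_iff₀ hK, ← abs_of_pos hK, ← abs_mul, abs_of_pos hK]
  have e3 : (((2 * (n : ℝ)) ^ d)⁻¹ * u n - m / (2 * k + 1) ^ d) * (2 * k + 1) ^ d =
      ((2 * k + 1) ^ d * u n - S (n - k)) / (2 * n) ^ d + (S (n - k) / (2 * n) ^ d - m) := by
    field_simp
    ring
  rw [e3]
  refine (abs_add_le _ _).trans (add_le_add ?_ le_rfl)
  rw [abs_div, abs_of_pos hN, mul_div_assoc', div_mul_eq_mul_div, ← sub_div]
  exact div_le_div_of_nonneg_right (h n hkn) hN.le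

theorem meas_real (d q n : ℕ) :
    Measurable (fun p : ℝ × Config d => (bettiN d q n p.1 p.2 : ℝ)) :=
  measurable_from_top.comp (measurable_bettiN d q n)

theorem meas_t (d q n : ℕ) (ω : Config d) : Measurable (fun t => (bettiN d q n t ω : ℝ)) := by
  have h : Measurable (fun t : ℝ => (t, ω)) := measurable_id.prodMk measurable_const
  have h2 := Measurable.comp (meas_real d q n) h
  simpa only [Function.comp_def] using h2

theorem meas_w (d q n : ℕ) (t : ℝ) : Measurable (fun ω : Config d => (bettiN d q n t ω : ℝ)) := by
  have h : Measurable (fun ω : Config d => (t, ω)) := measurable_const.prodMk measurable_id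
  have h2 := Measurable.comp (meas_real d q n) h
  simpa only [Function.comp_def] using h2

theorem abs_le_real (d q n : ℕ) (t : ℝ) (ω : Config d) :
    |(bettiN d q n t ω : ℝ)| ≤ (4 * n + 1) ^ d := by
  rw [abs_of_nonneg (Nat.cast_nonneg _)]
  exact_mod_cast bettiN_le d q n t ω

theorem int_t (d q n : ℕ) (ω : Config d) : Integrable (fun t => (bettiN d q n t ω : ℝ)) mu01 :=
  Integrable.of_bound (meas_t d q n ω).aestronglyMeasurable _
    (Eventually.of_forall fun t => abs_le_real d q n t ω)

theorem int_w (d q n : ℕ) (t : ℝ) (P : Measure (Config d)) [IsProbabilityMeasure P] :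
    Integrable (fun ω => (bettiN d q n t ω : ℝ)) P :=
  Integrable.of_bound (meas_w d q n t).aestronglyMeasurable _
    (Eventually.of_forall fun ω => abs_le_real d q n t ω)

theorem life_eq (d q n : ℕ) (ω : Config d) :
    lifetimeSum d q n ω = ∫ t, (bettiN d q n t ω : ℝ) ∂mu01 :=
  intervalIntegral.integral_of_le zero_le_one

theorem meas_life (d q n : ℕ) : Measurable (lifetimeSum d q n) := by
  have h : lifetimeSum d q n = fun ω => ∫ t, (bettiN d q n t ω : ℝ) ∂mu01 :=
    funext (life_eq d q n)
  rw [h]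
  exact ((meas_real d q n).comp measurable_swap).stronglyMeasurable.integral_prod_right'.measurable

theorem life_bd (d q n : ℕ) (ω : Config d) : |lifetimeSum d q n ω| ≤ (4 * n + 1) ^ d := by
  rw [life_eq]
  have := norm_integral_le_of_norm_le_const (μ := mu01) (f := fun t => (bettiN d q n t ω : ℝ))
    (C := (4 * n + 1) ^ d) (Eventually.of_forall fun t => abs_le_real d q n t ω)
  simpa using this

theorem life_near {d q k n : ℕ} (hk : k ≤ n) (ω : Config d) :
    |((2 * k + 1) ^ d : ℝ) * lifetimeSum d q n ω
        - ∑ x ∈ Ib d (n - k), lifetimeSum d q k (configShift x ω)| ≤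
      (2 * k + 1) ^ d * (4 * n + 1) ^ d - (2 * (n - k) + 1) ^ d * (4 * k + 1) ^ d := by
  simp only [life_eq]
  rw [← integral_const_mul, ← integral_finsetSum _ (fun x _ => int_t d q k (configShift x ω))]
  exact avg_bound mu01 ((int_t d q n ω).const_mul _)
    (integrable_finsetSum _ (fun x _ => int_t d q k (configShift x ω)))
    (fun t => bettiN_near hk t ω)

theorem exp_near {d q k n : ℕ} (hk : k ≤ n) (t : ℝ) {P : Measure (Config d)}
    [IsProbabilityMeasure P] (hs : Stationary P) :
    |((2 * k + 1) ^ d : ℝ) * ∫ ω, (bettiN d q n t ω : ℝ) ∂P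
        - (2 * ((n - k : ℕ) : ℝ) + 1) ^ d * ∫ ω, (bettiN d q k t ω : ℝ) ∂P| ≤
      (2 * k + 1) ^ d * (4 * n + 1) ^ d - (2 * (n - k) + 1) ^ d * (4 * k + 1) ^ d := by
  have hi : ∀ x, Integrable (fun ω => (bettiN d q k t (configShift x ω) : ℝ)) P := fun x =>
    integrable_bdd ((meas_w d q k t).comp (measurable_shift x)) (fun ω => abs_le_real d q k t _)
  have h := avg_bound P ((int_w d q n t P).const_mul ((2 * k + 1) ^ d : ℝ))
    (integrable_finsetSum (Ib d (n - k)) (fun x _ => hi x))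
    (fun ω => bettiN_near hk t ω)
  rw [integral_const_mul, integral_finsetSum _ (fun x _ => hi x)] at h
  simp only [fun x => integral_shift hs x (meas_w d q k t)] at h
  rw [Finset.sum_const, card_Ib, nsmul_eq_mul] at h
  exact_mod_cast h

theorem betaHat_near {d q : ℕ} (k : ℕ) (t : ℝ) {P : Measure (Config d)}
    [IsProbabilityMeasure P] (hs : Stationary P) :
    |betaHat d q P t - (∫ ω, (bettiN d q k t ω : ℝ) ∂P) / (2 * k + 1) ^ d| ≤ epsk d k := by
  refine le_of_forall_pos_le_add fun δ hδ => ?_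
  set E := ∫ ω, (bettiN d q k t ω : ℝ) ∂P with hE
  have h := squeeze_near d k (fun n => ∫ ω, (bettiN d q n t ω : ℝ) ∂P)
    (fun n => (2 * (n : ℝ) + 1) ^ d * E) E (fun n hn => exp_near hn t hs) (by
      have : (fun n : ℕ => ((2 * (n : ℝ) + 1) ^ d)⁻¹ * ((2 * (n : ℝ) + 1) ^ d * E))
          = fun _ => E := by
        funext n
        have : (0 : ℝ) < (2 * (n : ℝ) + 1) ^ d := by positivity
        field_simp
      rw [this]
      exact tendsto_const_nhds) hδ
  have hu : ∀ᶠ n : ℕ in atTop, ((2 * (n : ℝ)) ^ d)⁻¹ * ∫ ω, (bettiN d q n t ω : ℝ) ∂P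
      ≤ E / (2 * k + 1) ^ d + (epsk d k + δ) := by
    filter_upwards [h] with n hn
    have := (abs_le.1 hn).2
    linarith
  have hl : ∀ᶠ n : ℕ in atTop, E / (2 * k + 1) ^ d - (epsk d k + δ) ≤
      ((2 * (n : ℝ)) ^ d)⁻¹ * ∫ ω, (bettiN d q n t ω : ℝ) ∂P := by
    filter_upwards [h] with n hn
    have := (abs_le.1 hn).1
    linarith
  rw [abs_le]
  have h1 : betaHat d q P t ≤ E / (2 * k + 1) ^ d + (epsk d k + δ) :=
    limsup_le_of_le (isCoboundedUnder_le_of_eventually_le _ hl) hu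
  have h2 : E / (2 * k + 1) ^ d - (epsk d k + δ) ≤ betaHat d q P t :=
    le_limsup_of_frequently_le hl.frequently (isBoundedUnder_of_eventually_le hu)
  constructor <;> linarith

theorem meas_exp (d q n : ℕ) (P : Measure (Config d)) [IsProbabilityMeasure P] :
    Measurable (fun t => ∫ ω, (bettiN d q n t ω : ℝ) ∂P) :=
  (meas_real d q n).stronglyMeasurable.integral_prod_right'.measurable

theorem meas_betaHat (d q : ℕ) (P : Measure (Config d)) [IsProbabilityMeasure P] :
    Measurable (betaHat d q P) :=
  Measurable.limsup (fun n => (meas_exp d q n P).const_mul _)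

theorem int_exp (d q k : ℕ) (P : Measure (Config d)) [IsProbabilityMeasure P] :
    Integrable (fun t => (∫ ω, (bettiN d q k t ω : ℝ) ∂P)) mu01 :=
  Integrable.of_bound (meas_exp d q k P).aestronglyMeasurable ((4 * k + 1) ^ d)
    (Eventually.of_forall fun t => by
      have := norm_integral_le_of_norm_le_const (μ := P)
        (f := fun ω => (bettiN d q k t ω : ℝ))
        (C := (4 * k + 1) ^ d) (Eventually.of_forall fun ω => abs_le_real d q k t ω)
      simpa using this)

theorem int_betaHat_near {d q : ℕ} (k : ℕ) {P : Measure (Config d)}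
    [IsProbabilityMeasure P] (hs : Stationary P) :
    |(∫ t in (0 : ℝ)..1, betaHat d q P t) - (∫ ω, lifetimeSum d q k ω ∂P) / (2 * k + 1) ^ d|
      ≤ epsk d k := by
  rw [intervalIntegral.integral_of_le zero_le_one]
  have hfub : ∫ ω, lifetimeSum d q k ω ∂P
      = ∫ t, (∫ ω, (bettiN d q k t ω : ℝ) ∂P) ∂mu01 := by
    simp only [life_eq]
    refine integral_integral_swap ?_
    exact Integrable.of_bound ((meas_real d q k).comp measurable_swap).aestronglyMeasurable
      ((4 * k + 1) ^ d) (Eventually.of_forall fun p => abs_le_real d q k _ _)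
  rw [hfub, ← integral_div]
  have hg := (int_exp d q k P).div_const ((2 * k + 1 : ℝ) ^ d)
  refine avg_bound mu01 ?_ hg (fun t => betaHat_near k t hs)
  have hd : Integrable (fun t => betaHat d q P t
      - (∫ ω, (bettiN d q k t ω : ℝ) ∂P) / (2 * k + 1) ^ d) mu01 :=
    Integrable.of_bound ((meas_betaHat d q P).sub
      ((meas_exp d q k P).div_const _)).aestronglyMeasurable _
      (Eventually.of_forall fun t => betaHat_near k t hs)
  have h3 := hd.add hg
  refine h3.congr (Eventually.of_forall fun t => ?_)
  simp

theorem lln_aux (d q : ℕ) (P : Measure (Config d)) [IsProbabilityMeasure P]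
    (hstat : Stationary P) (herg : ErgodicConfig P) :
    ∀ᵐ ω ∂P,
      Tendsto (fun n : ℕ => ((2 * (n : ℝ)) ^ d)⁻¹ * lifetimeSum d q n ω)
        atTop (𝓝 (∫ t in (0 : ℝ)..1, betaHat d q P t)) := by
  have h := ae_all_iff.2 fun k =>
    ergodic_thm hstat herg (meas_life d q k) (life_bd d q k)
  filter_upwards [h] with ω hω
  rw [Metric.tendsto_atTop']
  intro ε hε
  obtain ⟨k, hk⟩ := ((epsk_lim d).eventually_lt_const (show (0 : ℝ) < ε / 4 by linarith)).exists
  have h1 := squeeze_near d k (fun n => lifetimeSum d q n ω)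
    (fun n => ∑ x ∈ Ib d n, lifetimeSum d q k (configShift x ω)) _
    (fun n hn => life_near hn ω) (hω k) (show (0 : ℝ) < ε / 4 by linarith)
  have h2 := int_betaHat_near (q := q) k hstat
  obtain ⟨N, hN⟩ := eventually_atTop.1 h1
  refine ⟨N, fun n hn => ?_⟩
  have h3 := abs_le.1 (hN n hn.le)
  have h4 := abs_le.1 h2
  rw [Real.dist_eq, abs_lt]
  constructor <;> linarith [h3.1, h3.2, h4.1, h4.2]

/-- **LLN for lifetime sums.** Fix `0 ≤ q < d` and let `P` be a stationary and
ergodic probability measure on `Ω = [0,1]^{K^d}` whose marginal distribution functions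
`F^Q(t) = P(ω_Q ≤ t)` are continuous on `[0,1]` for every elementary cube `Q`. Then,
`P`-almost surely, `|Λ_n|⁻¹ L_q^n → ∫_0^1 β̂_q(t) dt` as `n → ∞`, where
`β̂_q(t) = limsup_{n→∞} |Λ_n|⁻¹ E[β_q^n(t)]`. -/
theorem lln_lifetime_sum (d q : ℕ) (hq : q < d)
    (P : Measure (Config d)) [IsProbabilityMeasure P]
    (hstat : Stationary P) (herg : ErgodicConfig P)
    (hcont : ∀ Q : ElemCube d,
      ContinuousOn (fun t : ℝ => (P {ω : Config d | (ω Q : ℝ) ≤ t}).toReal)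
        (Set.Icc (0 : ℝ) 1)) :
    ∀ᵐ ω ∂P,
      Tendsto (fun n : ℕ => ((2 * (n : ℝ)) ^ d)⁻¹ * lifetimeSum d q n ω)
        atTop (𝓝 (∫ t in (0 : ℝ)..1, betaHat d q P t)) := by
  exact lln_aux d q P hstat herg

end
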